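/- arXiv:1204.5836 — 8 statements merged into one kernel-verified Lean document; each statement's English description precedes it below -/
import Mathlib

section
/- Under Assumption A, the set V := K ∖ P_γ is an open subset of K which witnesses the open set condition: γⱼ(V) ∩ γ_k(V) = ∅ for all j ≠ k, and ⋃_{j=1}^N γⱼ(V) ⊆ V. -/
/-- The branch set `B_γ` of a family of maps `γ`. -/
def branchSet {K : Type*} {N : ℕ} (γ : Fin N → K → K) : Set K :=
  {b | ∃ a, ∃ i j : Fin N, i ≠ j ∧ γ i a = b ∧ γ j a = b}

/-- The composition `γ_{j₁} ∘ ⋯ ∘ γ_{j_k}` associated with a word `w = (j₁, …, j_k)`. -/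
def wordComp {K : Type*} {N : ℕ} (γ : Fin N → K → K) {k : ℕ} (w : Fin k → Fin N) (x : K) : K :=
  (List.ofFn w).foldr (fun j z => γ j z) x

/-- The postcritical set `P_γ` of a family of maps `γ`. -/
def postCritical {K : Type*} {N : ℕ} (γ : Fin N → K → K) : Set K :=
  {a | ∃ k : ℕ, 1 ≤ k ∧ ∃ w : Fin k → Fin N, wordComp γ w a ∈ branchSet γ}

section

variable {K : Type*} {N : ℕ} {γ : Fin N → K → K}

theorem wordComp_fin_one (γ : Fin N → K → K) (w : Fin 1 → Fin N) (x : K) :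
    wordComp γ w x = γ (w 0) x := by
  simp [wordComp]

theorem wordComp_snoc (γ : Fin N → K → K) {k : ℕ} (w : Fin k → Fin N) (j : Fin N) (x : K) :
    wordComp γ (Fin.snoc w j : Fin (k + 1) → Fin N) x = wordComp γ w (γ j x) := by
  rw [wordComp, List.ofFn_succ_last]
  simp [wordComp]

theorem mem_postCritical_of_apply_mem_branchSet {j : Fin N} {a : K} (ha : γ j a ∈ branchSet γ) :
    a ∈ postCritical γ :=
  ⟨1, le_rfl, fun _ => j, by rwa [wordComp_fin_one]⟩

theorem mem_postCritical_of_apply_mem {j : Fin N} {a : K} (ha : γ j a ∈ postCritical γ) :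
    a ∈ postCritical γ := by
  obtain ⟨k, -, w, hw⟩ := ha
  exact ⟨k + 1, k.succ_pos, Fin.snoc w j, by rwa [wordComp_snoc]⟩

theorem mapsTo_compl_postCritical (γ : Fin N → K → K) (j : Fin N) :
    Set.MapsTo (γ j) (postCritical γ)ᶜ (postCritical γ)ᶜ :=
  fun _ => mt mem_postCritical_of_apply_mem

theorem disjoint_image_compl_postCritical {j k : Fin N} (hjk : j ≠ k)
    (hoverlap : ∀ a b, γ j a = γ k b → a = b) :
    Disjoint (γ j '' (postCritical γ)ᶜ) (γ k '' (postCritical γ)ᶜ) := by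
  rw [Set.disjoint_left]
  rintro _ ⟨a, ha, rfl⟩ ⟨b, -, hba⟩
  obtain rfl : a = b := hoverlap a b hba.symm
  exact ha (mem_postCritical_of_apply_mem_branchSet ⟨a, j, k, hjk, rfl, hba⟩)

theorem open_set_condition_of_assumptionA_general [TopologicalSpace K] [T1Space K]
    (hoverlap : ∀ j k : Fin N, j ≠ k → ∀ a b, γ j a = γ k b → a = b)
    (hPfin : (postCritical γ).Finite) :
    IsOpen (postCritical γ)ᶜ ∧
      (∀ j k : Fin N, j ≠ k →
        γ j '' (postCritical γ)ᶜ ∩ γ k '' (postCritical γ)ᶜ = ∅) ∧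
      (⋃ j : Fin N, γ j '' (postCritical γ)ᶜ) ⊆ (postCritical γ)ᶜ :=
  ⟨hPfin.isClosed.isOpen_compl,
    fun j k hjk => (disjoint_image_compl_postCritical hjk (hoverlap j k hjk)).inter_eq,
    Set.iUnion_subset fun j => (mapsTo_compl_postCritical γ j).image_subset⟩

end

/-- Under Assumption A, the set `V := K ∖ P_γ` is open and witnesses the
open set condition: `γⱼ(V) ∩ γₖ(V) = ∅` for `j ≠ k`, and `⋃ⱼ γⱼ(V) ⊆ V`. -/
theorem open_set_condition_of_assumptionA
    {K : Type*} [MetricSpace K] [CompactSpace K]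
    (N : ℕ) (hN : 2 ≤ N)
    (γ : Fin N → K → K)
    (c c' : ℝ) (hc'pos : 0 < c') (hc'c : c' ≤ c) (hc1 : c < 1)
    (hcontr : ∀ (i : Fin N) (x y : K),
      c' * dist x y ≤ dist (γ i x) (γ i y) ∧ dist (γ i x) (γ i y) ≤ c * dist x y)
    (hss : ∀ x : K, ∃ (i : Fin N) (y : K), γ i y = x)
    (h : K → K) (hh : Continuous h)
    (hhγ : ∀ (y : K) (i : Fin N), h (γ i y) = y)
    (hpre : ∀ y : K, h ⁻¹' {y} = {x | ∃ i : Fin N, γ i y = x})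
    (hBfin : (branchSet γ).Finite) (hPfin : (postCritical γ).Finite)
    (hA3 : ∀ b ∈ branchSet γ, ∀ k : ℕ, 1 ≤ k → branchSet γ ∩ h^[k] ⁻¹' {b} = ∅) :
    IsOpen (postCritical γ)ᶜ ∧
      (∀ j k : Fin N, j ≠ k →
        γ j '' (postCritical γ)ᶜ ∩ γ k '' (postCritical γ)ᶜ = ∅) ∧
      (⋃ j : Fin N, γ j '' (postCritical γ)ᶜ) ⊆ (postCritical γ)ᶜ :=
  open_set_condition_of_assumptionA_general
    (fun j k _ a b hab => by rw [← hhγ a j, hab, hhγ b k]) hPfin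
end

section
/- Under Assumption A, if a ∈ K satisfies h^n(a) ∉ B_γ for every integer n ≥ 0, then for every integer n ≥ 1 the n-fold preimage of h^n(a) under h has at least N^{n−1} elements: #((h^n)⁻¹({h^n(a)})) ≥ N^{n−1}. -/
/-!
In the tree of iterated preimages under `h`, the children of a vertex `y` are the points `γ i y`,
and `y` has `N` distinct children unless one of them is a branch point. By the third part of
Assumption A, the tree above a branch point contains no further branch point, so it branches
`N`-fold at every vertex. Hence each vertex either has `N` children or has a child above which the
tree is full; passing to that child costs one level, that is, one factor `N`, and this happens once.
-/

section Fibers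

variable {α β : Type*}

theorem encard_mul_le_encard_preimage {f : α → β} {s : Set β} {L : ℕ∞}
    (hL : ∀ y ∈ s, L ≤ (f ⁻¹' {y}).encard) : s.encard * L ≤ (f ⁻¹' s).encard := by
  obtain hs | hs := s.finite_or_infinite
  · induction s, hs using Set.Finite.induction_on with
    | empty => simp
    | @insert y s hys _ ih =>
      have hdisj : Disjoint (f ⁻¹' s) (f ⁻¹' {y}) :=
        (Set.disjoint_singleton_right.2 hys).preimage f
      calc (insert y s).encard * L = s.encard * L + L := by
            rw [Set.encard_insert_of_notMem hys, add_mul, one_mul]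
        _ ≤ (f ⁻¹' s).encard + (f ⁻¹' {y}).encard :=
            add_le_add (ih fun z hz => hL z (.inr hz)) (hL y (.inl rfl))
        _ = (f ⁻¹' insert y s).encard := by
            rw [← Set.encard_union_eq hdisj, ← Set.preimage_union, Set.union_singleton]
  · obtain rfl | hL0 := eq_or_ne L 0
    · simp
    · have hsub : s ⊆ f '' (f ⁻¹' s) := fun y hy => by
        obtain ⟨x, rfl⟩ : (f ⁻¹' {y}).Nonempty :=
          Set.encard_pos.1 ((pos_iff_ne_zero.2 hL0).trans_le (hL y hy))
        exact ⟨x, hy, rfl⟩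
      rw [(hs.mono hsub).of_image.encard_eq]
      exact le_top

theorem finite_preimage_iterate {h : α → α} (hfin : ∀ x, (h ⁻¹' {x}).Finite) {s : Set α}
    (hs : s.Finite) (n : ℕ) : (h^[n] ⁻¹' s).Finite := by
  induction n with
  | zero => exact hs
  | succ n ih => exact ih.preimage' fun y _ => hfin y

/-- The tree of iterated preimages of `x` under `h` branches at least `N`-fold at every vertex. The
root `x` counts as a vertex (`k = 0`), and `N = ⊤` is allowed. -/
def BackwardBranching (h : α → α) (N : ℕ∞) (x : α) : Prop :=
  ∀ k, ∀ y ∈ h^[k] ⁻¹' {x}, N ≤ (h ⁻¹' {y}).encard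

theorem BackwardBranching.pow_le_encard_preimage_iterate {h : α → α} {N : ℕ∞} {x : α}
    (hx : BackwardBranching h N x) (n : ℕ) : N ^ n ≤ (h^[n] ⁻¹' {x}).encard := by
  induction n with
  | zero => simp
  | succ n ih =>
    calc N ^ (n + 1) = N ^ n * N := pow_succ _ _
      _ ≤ (h^[n] ⁻¹' {x}).encard * N := by gcongr
      _ ≤ (h^[n + 1] ⁻¹' {x}).encard := encard_mul_le_encard_preimage (hx n)

theorem pow_le_encard_preimage_iterate_succ {h : α → α} {N : ℕ∞} (hsurj : Function.Surjective h)
    (hbranch : ∀ x, N ≤ (h ⁻¹' {x}).encard ∨ ∃ y ∈ h ⁻¹' {x}, BackwardBranching h N y)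
    (n : ℕ) (x : α) : N ^ n ≤ (h^[n + 1] ⁻¹' {x}).encard := by
  induction n generalizing x with
  | zero => simpa [Set.Nonempty] using hsurj x
  | succ n ih =>
    rw [Function.iterate_succ', Set.preimage_comp]
    obtain hx | ⟨y, hyx, hy⟩ := hbranch x
    · calc N ^ (n + 1) = N * N ^ n := pow_succ' _ _
        _ ≤ (h ⁻¹' {x}).encard * N ^ n := by gcongr
        _ ≤ (h^[n + 1] ⁻¹' (h ⁻¹' {x})).encard :=
            encard_mul_le_encard_preimage fun y _ => ih y
    · calc N ^ (n + 1) ≤ (h^[n + 1] ⁻¹' {y}).encard := hy.pow_le_encard_preimage_iterate _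
        _ ≤ (h^[n + 1] ⁻¹' (h ⁻¹' {x})).encard :=
            Set.encard_le_encard <| Set.preimage_mono <| Set.singleton_subset_iff.2 hyx

end Fibers

section BranchSet

variable {K : Type*} {N : ℕ} {γ : Fin N → K → K} {h : K → K}

theorem encard_preimage_singleton_of_disjoint_branchSet {y : K}
    (hpre : h ⁻¹' {y} = {x | ∃ i : Fin N, γ i y = x})
    (hy : Disjoint (branchSet γ) (h ⁻¹' {y})) : (h ⁻¹' {y}).encard = N := by
  have hinj : Function.Injective fun i => γ i y := by
    intro i j hij
    by_contra hne
    refine Set.disjoint_left.1 hy ⟨y, i, j, hne, rfl, hij.symm⟩ ?_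
    rw [hpre]
    exact ⟨i, rfl⟩
  calc (h ⁻¹' {y}).encard = (Set.range fun i => γ i y).encard := congrArg Set.encard hpre
    _ = N := by simp [← Set.image_univ, hinj.encard_image]

theorem backwardBranching_of_disjoint_branchSet
    (hpre : ∀ y : K, h ⁻¹' {y} = {x | ∃ i : Fin N, γ i y = x}) {x : K}
    (hx : ∀ k, Disjoint (branchSet γ) (h^[k + 1] ⁻¹' {x})) : BackwardBranching h N x := by
  intro k y hy
  have hsub : h ⁻¹' {y} ⊆ h^[k + 1] ⁻¹' {x} :=
    Set.preimage_mono (f := h) (Set.singleton_subset_iff.2 hy)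
  exact (encard_preimage_singleton_of_disjoint_branchSet (hpre y) ((hx k).mono_right hsub)).ge

theorem le_encard_preimage_or_exists_backwardBranching
    (hpre : ∀ y : K, h ⁻¹' {y} = {x | ∃ i : Fin N, γ i y = x})
    (hA3 : ∀ b ∈ branchSet γ, ∀ k : ℕ, 1 ≤ k → branchSet γ ∩ h^[k] ⁻¹' {b} = ∅) (x : K) :
    N ≤ (h ⁻¹' {x}).encard ∨ ∃ b ∈ h ⁻¹' {x}, BackwardBranching h N b := by
  by_cases hx : Disjoint (branchSet γ) (h ⁻¹' {x})
  · exact .inl (encard_preimage_singleton_of_disjoint_branchSet (hpre x) hx).ge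
  · obtain ⟨b, hb, hbx⟩ := Set.not_disjoint_iff.1 hx
    exact .inr ⟨b, hbx, backwardBranching_of_disjoint_branchSet hpre fun k =>
      Set.disjoint_iff_inter_eq_empty.2 (hA3 b hb (k + 1) k.succ_pos)⟩

end BranchSet

theorem preimage_card_lower_bound_general {K : Type*} {N : ℕ} (hN : N ≠ 0) {γ : Fin N → K → K}
    {h : K → K} (hpre : ∀ y : K, h ⁻¹' {y} = {x | ∃ i : Fin N, γ i y = x})
    (hA3 : ∀ b ∈ branchSet γ, ∀ k : ℕ, 1 ≤ k → branchSet γ ∩ h^[k] ⁻¹' {b} = ∅) (n : ℕ) (x : K) :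
    N ^ n ≤ (h^[n + 1] ⁻¹' {x}).ncard := by
  have hsurj : Function.Surjective h := fun y => by
    have hmem : γ ⟨0, Nat.pos_of_ne_zero hN⟩ y ∈ h ⁻¹' {y} := by
      rw [hpre]
      exact ⟨_, rfl⟩
    exact ⟨_, hmem⟩
  have hfin (y : K) : (h ⁻¹' {y}).Finite := by
    rw [hpre]
    exact Set.finite_range fun i => γ i y
  have htree : (h^[n + 1] ⁻¹' {x}).Finite := finite_preimage_iterate hfin (Set.finite_singleton x) _
  rw [← Nat.cast_le (α := ℕ∞), htree.cast_ncard_eq, Nat.cast_pow]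
  exact pow_le_encard_preimage_iterate_succ hsurj
    (le_encard_preimage_or_exists_backwardBranching hpre hA3) n x

/-- Under Assumption A, if `a ∈ K` satisfies `h^n(a) ∉ B_γ` for every `n ≥ 0`,
then for every `n ≥ 1` one has `#((h^n)⁻¹({h^n(a)})) ≥ N^{n−1}`. -/
theorem preimage_card_lower_bound
    {K : Type*} [MetricSpace K] [CompactSpace K]
    (N : ℕ) (hN : 2 ≤ N)
    (γ : Fin N → K → K)
    (c c' : ℝ) (hc'pos : 0 < c') (hc'c : c' ≤ c) (hc1 : c < 1)
    (hcontr : ∀ (i : Fin N) (x y : K),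
      c' * dist x y ≤ dist (γ i x) (γ i y) ∧ dist (γ i x) (γ i y) ≤ c * dist x y)
    (hss : ∀ x : K, ∃ (i : Fin N) (y : K), γ i y = x)
    (h : K → K) (hh : Continuous h)
    (hhγ : ∀ (y : K) (i : Fin N), h (γ i y) = y)
    (hpre : ∀ y : K, h ⁻¹' {y} = {x | ∃ i : Fin N, γ i y = x})
    (hBfin : (branchSet γ).Finite) (hPfin : (postCritical γ).Finite)
    (hA3 : ∀ b ∈ branchSet γ, ∀ k : ℕ, 1 ≤ k → branchSet γ ∩ h^[k] ⁻¹' {b} = ∅) :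
    ∀ a : K, (∀ n : ℕ, h^[n] a ∉ branchSet γ) →
      ∀ n : ℕ, 1 ≤ n → N ^ (n - 1) ≤ (h^[n] ⁻¹' {h^[n] a}).ncard := by
  intro a _ n hn
  obtain ⟨m, rfl⟩ := Nat.exists_eq_add_of_le' hn
  exact preimage_card_lower_bound_general (by lia) hpre hA3 m _
end

section
/- Under Assumption A, let (μ_n)_{n≥0} be a sequence of finite Borel measures on K such that for every n ≥ 0: μ_{n+1}({h(x)}) = N·μ_n({x}) for every x ∈ K ∖ B_γ, and μ_{n+1}({h(x)}) ≤ N·μ_n({x}) for every x ∈ B_γ. Then μ_0 has no point mass outside the orbit set Orb := ⋃_{b ∈ B_γ} ⋃_{r ≥ 0} (h^r)⁻¹({b}); that is, μ_0({a}) = 0 for every a ∈ K with h^n(a) ∉ B_γ for all n ≥ 0. -/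
/-!
If `hⁿ x = hⁿ a` and the forward orbit of `a` avoids the branch set, the point-mass relations give
`Nⁿ μ₀{a} = μₙ{hⁿ a} = μₙ{hⁿ x} ≤ Nⁿ μ₀{x}`, so `x` is at least as heavy as `a` for `μ₀`.
As `n` grows, the fibres `(hⁿ)⁻¹{hⁿ a}` of such `x` increase, and they do so strictly, because
`hⁿ a` is not a branch point and hence is not the only `h`-preimage of `hⁿ⁺¹ a`. So `μ₀` gives mass
at least `μ₀{a}` to infinitely many points, and being finite it has `μ₀{a} = 0`.
-/

open MeasureTheory

section Iterate

variable {X : Type*} {f : X → X} {a : X}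

theorem strictMono_preimage_iterate_singleton (hf : Function.Surjective f)
    (hfib : ∀ n, (f ⁻¹' {f (f^[n] a)}).Nontrivial) :
    StrictMono fun n ↦ f^[n] ⁻¹' {f^[n] a} := by
  refine strictMono_nat_of_lt_succ fun n ↦ ?_
  have hmem : f^[n] a ∈ f ⁻¹' {f (f^[n] a)} := rfl
  have hsub : {f^[n] a} ⊂ f ⁻¹' {f (f^[n] a)} :=
    (Set.singleton_subset_iff.2 hmem).ssubset_of_ne (hfib n).ne_singleton.symm
  have hpull : f^[n] ⁻¹' {f^[n] a} ⊂ f^[n] ⁻¹' (f ⁻¹' {f (f^[n] a)}) :=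
    (Set.preimage_mono hsub.subset).ssubset_of_ne ((hf.iterate n).preimage_injective.ne hsub.ne)
  simpa only [← Set.preimage_comp, ← Function.iterate_succ', ← Function.iterate_succ_apply'] using
    hpull

theorem infinite_iUnion_preimage_iterate_singleton (hf : Function.Surjective f)
    (hfib : ∀ n, (f ⁻¹' {f (f^[n] a)}).Nontrivial) :
    (⋃ n, f^[n] ⁻¹' {f^[n] a}).Infinite :=
  Set.infinite_iUnion (strictMono_preimage_iterate_singleton hf hfib).injective

theorem apply_zero_le_of_iterate_eq {R : Type*} [Mul R] [Preorder R] {c : R}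
    (hc : MulLECancellable c) {m : ℕ → X → R}
    (hge : ∀ n, c * m n (f^[n] a) ≤ m (n + 1) (f^[n + 1] a))
    (hle : ∀ n x, m (n + 1) (f x) ≤ c * m n x) {n : ℕ} {x : X} (hx : f^[n] x = f^[n] a) :
    m 0 a ≤ m 0 x := by
  induction n generalizing m a x with
  | zero => exact (congrArg (m 0) hx.symm).le
  | succ n ih =>
    have hsucc : m 1 (f a) ≤ m 1 (f x) :=
      ih (m := fun k ↦ m (k + 1)) (fun k ↦ hge (k + 1)) (fun k ↦ hle (k + 1)) hx
    exact hc <| calc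
      c * m 0 a ≤ m 1 (f a) := hge 0
      _ ≤ m 1 (f x) := hsucc
      _ ≤ c * m 0 x := hle 0 x

end Iterate

theorem measure_singleton_eq_zero_of_infinite {X : Type*} [MeasurableSpace X]
    [MeasurableSingletonClass X] {μ : Measure X} [IsFiniteMeasure μ] {s : Set X} {a : X}
    (hs : s.Infinite) (hle : ∀ x ∈ s, μ {a} ≤ μ {x}) : μ {a} = 0 := by
  by_contra hpos
  exact measure_ne_top μ s (hs.meas_eq_top ⟨μ {a}, hpos, hle⟩)

theorem nontrivial_preimage_singleton_of_notMem_branchSet {K : Type*} {N : ℕ} [Nontrivial (Fin N)]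
    {γ : Fin N → K → K} {h : K → K} (hγ : ∀ i, Function.LeftInverse h (γ i)) {x : K}
    (hx : x ∉ branchSet γ) : (h ⁻¹' {h x}).Nontrivial := by
  obtain ⟨i, j, hij⟩ := exists_pair_ne (Fin N)
  obtain ⟨k, hk⟩ : ∃ k, γ k (h x) ≠ x := by
    by_contra! hall
    exact hx ⟨h x, i, j, hij, hall i, hall j⟩
  exact ⟨γ k (h x), hγ k (h x), x, rfl, hk⟩

theorem no_point_mass_outside_orbit_general {K : Type*} [MeasurableSpace K]
    [MeasurableSingletonClass K] {N : ℕ} (hN : 2 ≤ N) {γ : Fin N → K → K} {h : K → K}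
    (hγ : ∀ i, Function.LeftInverse h (γ i)) {c : ENNReal} (hc₀ : c ≠ 0) (hc : c ≠ ⊤)
    {μ : ℕ → Measure K} [IsFiniteMeasure (μ 0)]
    (heq : ∀ n, ∀ x ∉ branchSet γ, μ (n + 1) {h x} = c * μ n {x})
    (hle : ∀ n, ∀ x ∈ branchSet γ, μ (n + 1) {h x} ≤ c * μ n {x})
    {a : K} (ha : ∀ n, h^[n] a ∉ branchSet γ) : μ 0 {a} = 0 := by
  have : Nontrivial (Fin N) := Fin.nontrivial_iff_two_le.2 hN
  have hsurj : Function.Surjective h := (hγ ⟨0, by lia⟩).surjective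
  have hinf : (⋃ n, h^[n] ⁻¹' {h^[n] a}).Infinite :=
    infinite_iUnion_preimage_iterate_singleton hsurj fun n ↦
      nontrivial_preimage_singleton_of_notMem_branchSet hγ (ha n)
  have hcancel : MulLECancellable c := fun _ _ ↦ (ENNReal.mul_le_mul_iff_right hc₀ hc).1
  have horbit (n : ℕ) : c * μ n {h^[n] a} ≤ μ (n + 1) {h^[n + 1] a} := by
    rw [Function.iterate_succ_apply', heq n _ (ha n)]
  have hpoint (n : ℕ) (x : K) : μ (n + 1) {h x} ≤ c * μ n {x} := by
    by_cases hx : x ∈ branchSet γ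
    exacts [hle n x hx, (heq n x hx).le]
  refine measure_singleton_eq_zero_of_infinite hinf fun x hx ↦ ?_
  obtain ⟨n, hn⟩ := Set.mem_iUnion.1 hx
  exact apply_zero_le_of_iterate_eq (m := fun k y ↦ μ k {y}) hcancel horbit hpoint hn

/-- Under Assumption A, if `(μₙ)` is a sequence of finite Borel measures on `K`
with `μ_{n+1}({h(x)}) = N·μₙ({x})` for `x ∉ B_γ` and `μ_{n+1}({h(x)}) ≤ N·μₙ({x})` for
`x ∈ B_γ`, then `μ₀` has no point mass outside the orbit set
`Orb = ⋃_{b ∈ B_γ} ⋃_{r ≥ 0} (h^r)⁻¹({b})`. -/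
theorem no_point_mass_outside_orbit
    {K : Type*} [MetricSpace K] [CompactSpace K]
    [MeasurableSpace K] [BorelSpace K]
    (N : ℕ) (hN : 2 ≤ N)
    (γ : Fin N → K → K)
    (c c' : ℝ) (hc'pos : 0 < c') (hc'c : c' ≤ c) (hc1 : c < 1)
    (hcontr : ∀ (i : Fin N) (x y : K),
      c' * dist x y ≤ dist (γ i x) (γ i y) ∧ dist (γ i x) (γ i y) ≤ c * dist x y)
    (hss : ∀ x : K, ∃ (i : Fin N) (y : K), γ i y = x)
    (h : K → K) (hh : Continuous h)
    (hhγ : ∀ (y : K) (i : Fin N), h (γ i y) = y)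
    (hpre : ∀ y : K, h ⁻¹' {y} = {x | ∃ i : Fin N, γ i y = x})
    (hBfin : (branchSet γ).Finite) (hPfin : (postCritical γ).Finite)
    (hA3 : ∀ b ∈ branchSet γ, ∀ k : ℕ, 1 ≤ k → branchSet γ ∩ h^[k] ⁻¹' {b} = ∅)
    (μ : ℕ → Measure K) (hfin : ∀ n, IsFiniteMeasure (μ n))
    (heq : ∀ n : ℕ, ∀ x : K, x ∉ branchSet γ → μ (n + 1) {h x} = N * μ n {x})
    (hle : ∀ n : ℕ, ∀ x ∈ branchSet γ, μ (n + 1) {h x} ≤ N * μ n {x}) :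
    ∀ a : K, (∀ n : ℕ, h^[n] a ∉ branchSet γ) → μ 0 {a} = 0 := by
  have := hfin 0
  exact fun a ha ↦ no_point_mass_outside_orbit_general hN (fun i y ↦ hhγ y i)
    (Nat.cast_ne_zero.2 (by lia)) (ENNReal.natCast_ne_top N) heq hle ha
end

section
/- Under Assumption A, let (μ_n)_{n≥0} be a sequence of finite Borel measures on K such that for every n ≥ 0: μ_{n+1}({h(x)}) = N·μ_n({x}) for every x ∈ K ∖ B_γ, and μ_{n+1}({h(x)}) ≤ N·μ_n({x}) for every x ∈ B_γ. Then for every b ∈ B_γ, every integer r ≥ 0, and every x ∈ (h^r)⁻¹({b}), one has N^r·μ_0({x}) = μ_r({b}); in particular μ_0({x}) = μ_0({x'}) for all x, x' ∈ (h^r)⁻¹({b}). -/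
/-!
Put `x_k = h^k(x)` for `x ∈ (h^r)⁻¹({b})`. For `k < r` the point `x_k` lies in `(h^(r-k))⁻¹({b})`,
so condition (3) of Assumption A keeps it out of `B_γ` and `μ_{k+1}({x_{k+1}}) = N·μ_k({x_k})`.
Thus `μ_0({x_0}), …, μ_r({x_r})` is a geometric progression of ratio `N` ending at `μ_r({b})`,
and its first term is determined by its last since `0 < N < ∞`.
-/

open MeasureTheory

theorem eq_pow_smul_of_succ_eq_smul {M α : Type*} [Monoid M] [MulAction M α] {c : M} {u : ℕ → α}
    {n : ℕ} (hu : ∀ k < n, u (k + 1) = c • u k) : u n = c ^ n • u 0 := by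
  induction n with
  | zero => rw [pow_zero, one_smul]
  | succ n ih =>
    calc u (n + 1) = c • u n := hu n n.lt_succ_self
      _ = c • c ^ n • u 0 := by rw [ih fun k hk => hu k (hk.trans n.lt_succ_self)]
      _ = c ^ (n + 1) • u 0 := by rw [smul_smul, pow_succ']

theorem iterate_notMem_of_disjoint_preimage_iterate {X : Type*} {h : X → X} {B C : Set X}
    (hBC : ∀ k : ℕ, 1 ≤ k → Disjoint B (h^[k] ⁻¹' C)) {r : ℕ} {x : X} (hx : h^[r] x ∈ C)
    {k : ℕ} (hk : k < r) : h^[k] x ∉ B := by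
  have hmem : h^[k] x ∈ h^[r - k] ⁻¹' C := by
    rwa [Set.mem_preimage, ← Function.iterate_add_apply, Nat.sub_add_cancel hk.le]
  exact (hBC (r - k) (Nat.sub_pos_of_lt hk)).notMem_of_mem_right hmem

theorem measure_singleton_iterate_eq_pow_mul {X : Type*} [MeasurableSpace X] {h : X → X}
    {B : Set X} {c : ENNReal} {μ : ℕ → Measure X}
    (hμ : ∀ n : ℕ, ∀ x : X, x ∉ B → μ (n + 1) {h x} = c * μ n {x})
    {r : ℕ} {x : X} (hx : ∀ k < r, h^[k] x ∉ B) :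
    μ r {h^[r] x} = c ^ r * μ 0 {x} :=
  eq_pow_smul_of_succ_eq_smul (u := fun k => μ k {h^[k] x}) fun k hk => by
    rw [Function.iterate_succ_apply', hμ k _ (hx k hk), smul_eq_mul]

theorem point_mass_on_backward_orbit_general {X : Type*} [MeasurableSpace X] {h : X → X}
    {B : Set X} {c : ENNReal} (hc₀ : c ≠ 0) (hc : c ≠ ⊤) {μ : ℕ → Measure X}
    (hμ : ∀ n : ℕ, ∀ x : X, x ∉ B → μ (n + 1) {h x} = c * μ n {x})
    {b : X} (hb : ∀ k : ℕ, 1 ≤ k → Disjoint B (h^[k] ⁻¹' {b})) (r : ℕ) :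
    (∀ x ∈ h^[r] ⁻¹' {b}, c ^ r * μ 0 {x} = μ r {b}) ∧
      ∀ x ∈ h^[r] ⁻¹' {b}, ∀ x' ∈ h^[r] ⁻¹' {b}, μ 0 {x} = μ 0 {x'} := by
  have hmass : ∀ x ∈ h^[r] ⁻¹' {b}, c ^ r * μ 0 {x} = μ r {b} := by
    intro x hx
    have horbit : ∀ k < r, h^[k] x ∉ B := fun k hk =>
      iterate_notMem_of_disjoint_preimage_iterate hb hx hk
    rw [← measure_singleton_iterate_eq_pow_mul hμ horbit, Set.mem_singleton_iff.mp hx]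
  refine ⟨hmass, fun x hx x' hx' => ?_⟩
  have hpow : c ^ r * μ 0 {x} = c ^ r * μ 0 {x'} := (hmass x hx).trans (hmass x' hx').symm
  exact (ENNReal.mul_right_inj (pow_ne_zero r hc₀) (ENNReal.pow_ne_top hc)).mp hpow

/-- Under Assumption A, if `(μₙ)` is a sequence of finite Borel measures on `K`
with `μ_{n+1}({h(x)}) = N·μₙ({x})` for `x ∉ B_γ` and `μ_{n+1}({h(x)}) ≤ N·μₙ({x})` for
`x ∈ B_γ`, then for every `b ∈ B_γ`, `r ≥ 0`, and `x ∈ (h^r)⁻¹({b})`, one has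
`N^r·μ₀({x}) = μ_r({b})`; in particular `μ₀({x}) = μ₀({x'})` for `x, x' ∈ (h^r)⁻¹({b})`. -/
theorem point_mass_on_backward_orbit
    {K : Type*} [MetricSpace K] [CompactSpace K]
    [MeasurableSpace K] [BorelSpace K]
    (N : ℕ) (hN : 2 ≤ N)
    (γ : Fin N → K → K)
    (c c' : ℝ) (hc'pos : 0 < c') (hc'c : c' ≤ c) (hc1 : c < 1)
    (hcontr : ∀ (i : Fin N) (x y : K),
      c' * dist x y ≤ dist (γ i x) (γ i y) ∧ dist (γ i x) (γ i y) ≤ c * dist x y)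
    (hss : ∀ x : K, ∃ (i : Fin N) (y : K), γ i y = x)
    (h : K → K) (hh : Continuous h)
    (hhγ : ∀ (y : K) (i : Fin N), h (γ i y) = y)
    (hpre : ∀ y : K, h ⁻¹' {y} = {x | ∃ i : Fin N, γ i y = x})
    (hBfin : (branchSet γ).Finite) (hPfin : (postCritical γ).Finite)
    (hA3 : ∀ b ∈ branchSet γ, ∀ k : ℕ, 1 ≤ k → branchSet γ ∩ h^[k] ⁻¹' {b} = ∅)
    (μ : ℕ → Measure K) (hfin : ∀ n, IsFiniteMeasure (μ n))
    (heq : ∀ n : ℕ, ∀ x : K, x ∉ branchSet γ → μ (n + 1) {h x} = N * μ n {x})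
    (hle : ∀ n : ℕ, ∀ x ∈ branchSet γ, μ (n + 1) {h x} ≤ N * μ n {x}) :
    ∀ b ∈ branchSet γ, ∀ r : ℕ,
      (∀ x ∈ h^[r] ⁻¹' {b}, (N : ENNReal) ^ r * μ 0 {x} = μ r {b}) ∧
      ∀ x ∈ h^[r] ⁻¹' {b}, ∀ x' ∈ h^[r] ⁻¹' {b}, μ 0 {x} = μ 0 {x'} := by
  intro b hb r
  exact point_mass_on_backward_orbit_general (Nat.cast_ne_zero.mpr (by omega))
    (ENNReal.natCast_ne_top N) heq
    (fun k hk => Set.disjoint_iff_inter_eq_empty.mpr (hA3 b hb k hk)) r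
end

section
/- The dual map G* is a proper contraction of the space of Borel probability measures on K with respect to the Kantorovich–Lipschitz distance: for all Borel probability measures μ, ν on K, L(G*(μ), G*(ν)) ≤ c·L(μ,ν), where L(μ,ν) := sup{ |∫_K a dμ − ∫_K a dν| : a : K → ℝ is 1-Lipschitz } (this supremum is finite since K is compact: the value of |∫a dμ − ∫a dν| is unchanged by adding constants to a, so one may restrict to 1-Lipschitz a bounded by the diameter of K). -/
open MeasureTheory
open scoped BigOperators ENNReal

/-- The dual map `G*(μ) = (1/N)·Σⱼ (γⱼ)_*μ` on Borel measures. -/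
noncomputable def Gstar {K : Type*} [MeasurableSpace K] {N : ℕ} (γ : Fin N → K → K)
    (μ : Measure K) : Measure K :=
  (N : ℝ≥0∞)⁻¹ • ∑ j : Fin N, Measure.map (γ j) μ

/-- The Kantorovich–Lipschitz distance
`L(μ,ν) = sup { |∫ a dμ − ∫ a dν| : a 1-Lipschitz }`. -/
noncomputable def Ldist {K : Type*} [MetricSpace K] [MeasurableSpace K]
    (μ ν : Measure K) : ℝ :=
  sSup {r : ℝ | ∃ a : K → ℝ, LipschitzWith 1 a ∧ r = |∫ x, a x ∂μ - ∫ x, a x ∂ν|}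

/-! If `a` is `1`-Lipschitz then each `a ∘ γ j` is `c`-Lipschitz, so its integrals against `μ` and
`ν` differ by at most `c * Ldist μ ν`. The integral of `a` against `Gstar γ μ` is the average over
`j` of the integrals of `a ∘ γ j` against `μ`, and averaging preserves the bound. Since `Ldist` is
a real `sSup`, with value `0` on unbounded sets, it dominates its members only because both
integrals lie within a fixed distance of the total mass times `a x₀`, the space being bounded. -/

open Set
open scoped NNReal

section LipschitzIntegral

variable {X E : Type*} [PseudoMetricSpace X] [BoundedSpace X] [MeasurableSpace X]
  [OpensMeasurableSpace X] [NormedAddCommGroup E] [SecondCountableTopologyEither X E]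
  {μ ν : Measure X} [IsFiniteMeasure μ] [IsFiniteMeasure ν] {C : ℝ≥0} {a : X → E}

theorem integrable_of_lipschitzWith (ha : LipschitzWith C a) : Integrable a μ := by
  obtain ⟨R, hR⟩ := (ha.isBounded_image BoundedSpace.bounded_univ).exists_norm_le
  exact .of_bound ha.continuous.aestronglyMeasurable R
    (.of_forall fun x => hR _ (mem_image_of_mem a (mem_univ x)))

variable [NormedSpace ℝ E] [CompleteSpace E]

theorem norm_integral_sub_smul_le_of_lipschitzWith (ha : LipschitzWith C a) (x₀ : X) :
    ‖∫ x, a x ∂μ - μ.real univ • a x₀‖ ≤ C * Metric.diam (univ : Set X) * μ.real univ := by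
  rw [← integral_const, ← integral_sub (integrable_of_lipschitzWith ha) (integrable_const _)]
  refine norm_integral_le_of_norm_le_const (.of_forall fun x => ?_)
  rw [← dist_eq_norm]
  exact ha.dist_le_mul_of_le <|
    Metric.dist_le_diam_of_mem BoundedSpace.bounded_univ (mem_univ x) (mem_univ x₀)

theorem dist_integral_le_of_lipschitzWith (hμν : μ univ = ν univ) (ha : LipschitzWith C a) :
    dist (∫ x, a x ∂μ) (∫ x, a x ∂ν) ≤ 2 * (C * Metric.diam (univ : Set X) * μ.real univ) := by
  obtain _ | ⟨⟨x₀⟩⟩ := isEmpty_or_nonempty X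
  · simp [Measure.eq_zero_of_isEmpty]
  have hreal : μ.real univ = ν.real univ := congrArg ENNReal.toReal hμν
  have hμ := norm_integral_sub_smul_le_of_lipschitzWith (μ := μ) ha x₀
  have hν := norm_integral_sub_smul_le_of_lipschitzWith (μ := ν) ha x₀
  rw [← dist_eq_norm] at hμ hν
  rw [← hreal] at hν
  linarith [dist_triangle_right (∫ x, a x ∂μ) (∫ x, a x ∂ν) (μ.real univ • a x₀)]

end LipschitzIntegral

theorem integral_Gstar {K E : Type*} [MeasurableSpace K] [NormedAddCommGroup E] [NormedSpace ℝ E]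
    [Module ℚ≥0 E] {N : ℕ} {γ : Fin N → K → K} {μ : Measure K} {a : K → E}
    (hγ : ∀ j, AEMeasurable (γ j) μ) (ha : ∀ j, Integrable a (μ.map (γ j))) :
    ∫ x, a x ∂(Gstar γ μ) = 𝔼 j, ∫ x, a (γ j x) ∂μ := by
  rw [Gstar, integral_smul_measure, integral_finsetSum_measure fun j _ => ha j,
    Finset.expect, Finset.card_univ, Fintype.card_fin, ← NNRat.cast_smul_eq_nnqsmul ℝ]
  simp only [integral_map (hγ _) (ha _).aestronglyMeasurable, ENNReal.toReal_inv,
    ENNReal.toReal_natCast, NNRat.cast_inv, NNRat.cast_natCast]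

section Ldist

variable {K : Type*} [MetricSpace K] [MeasurableSpace K] {μ ν : Measure K}

theorem Ldist_le {r : ℝ}
    (h : ∀ a : K → ℝ, LipschitzWith 1 a → |∫ x, a x ∂μ - ∫ x, a x ∂ν| ≤ r) :
    Ldist μ ν ≤ r := by
  refine csSup_le ⟨_, fun _ => 0, LipschitzWith.const' 0, rfl⟩ ?_
  rintro _ ⟨a, ha, rfl⟩
  exact h a ha

variable [BoundedSpace K] [OpensMeasurableSpace K] [IsFiniteMeasure μ] [IsFiniteMeasure ν]
  {a : K → ℝ}

theorem abs_integral_sub_le_Ldist (hμν : μ univ = ν univ) (ha : LipschitzWith 1 a) :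
    |∫ x, a x ∂μ - ∫ x, a x ∂ν| ≤ Ldist μ ν := by
  refine le_csSup ⟨2 * ((1 : ℝ≥0) * Metric.diam (univ : Set K) * μ.real univ), ?_⟩ ⟨a, ha, rfl⟩
  rintro _ ⟨b, hb, rfl⟩
  exact dist_integral_le_of_lipschitzWith hμν hb

theorem abs_integral_sub_le_mul_Ldist {C : ℝ≥0} (hμν : μ univ = ν univ)
    (ha : LipschitzWith C a) : |∫ x, a x ∂μ - ∫ x, a x ∂ν| ≤ C * Ldist μ ν := by
  obtain rfl | hC := eq_or_ne C 0
  · simpa [Real.dist_eq] using dist_integral_le_of_lipschitzWith hμν ha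
  have hscaled : LipschitzWith 1 fun x => (C : ℝ)⁻¹ * a x := by
    simpa [Function.comp_def, hC] using (lipschitzWith_smul (C : ℝ)⁻¹).comp ha
  have h := abs_integral_sub_le_Ldist hμν hscaled
  rwa [integral_const_mul, integral_const_mul, ← mul_sub, abs_mul, abs_inv, NNReal.abs_eq,
    inv_mul_le_iff₀ (NNReal.coe_pos.2 (pos_iff_ne_zero.2 hC))] at h

end Ldist

theorem Gstar_contraction_general {K : Type*} [MetricSpace K] [BoundedSpace K]
    [MeasurableSpace K] [BorelSpace K] {N : ℕ} [NeZero N] {γ : Fin N → K → K} {c : ℝ≥0}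
    (hγ : ∀ j, LipschitzWith c (γ j)) (μ ν : Measure K) [IsFiniteMeasure μ] [IsFiniteMeasure ν]
    (hμν : μ univ = ν univ) :
    Ldist (Gstar γ μ) (Gstar γ ν) ≤ c * Ldist μ ν := by
  refine Ldist_le fun a ha => ?_
  have hint (ρ : Measure K) [IsFiniteMeasure ρ] :
      ∫ x, a x ∂(Gstar γ ρ) = 𝔼 j, ∫ x, a (γ j x) ∂ρ :=
    integral_Gstar (fun j => (hγ j).continuous.aemeasurable)
      fun j => integrable_of_lipschitzWith ha
  have hcomp (j : Fin N) : LipschitzWith c (a ∘ γ j) := by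
    simpa only [one_mul] using ha.comp (hγ j)
  calc |∫ x, a x ∂(Gstar γ μ) - ∫ x, a x ∂(Gstar γ ν)|
      = |𝔼 j, (∫ x, a (γ j x) ∂μ - ∫ x, a (γ j x) ∂ν)| := by
        rw [hint, hint, Finset.expect_sub_distrib]
    _ ≤ 𝔼 j, |∫ x, a (γ j x) ∂μ - ∫ x, a (γ j x) ∂ν| := Finset.abs_expect_le _ _
    _ ≤ c * Ldist μ ν := Finset.expect_le Finset.univ_nonempty
        fun j _ => abs_integral_sub_le_mul_Ldist hμν (hcomp j)

/-- `G*` is a proper contraction of the space of Borel probability measures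
on `K` with respect to the Kantorovich–Lipschitz distance: `L(G*(μ), G*(ν)) ≤ c·L(μ,ν)`. -/
theorem Gstar_contraction
    {K : Type*} [MetricSpace K] [CompactSpace K]
    [MeasurableSpace K] [BorelSpace K]
    (N : ℕ) (hN : 2 ≤ N)
    (γ : Fin N → K → K)
    (c c' : ℝ) (hc'pos : 0 < c') (hc'c : c' ≤ c) (hc1 : c < 1)
    (hcontr : ∀ (i : Fin N) (x y : K),
      c' * dist x y ≤ dist (γ i x) (γ i y) ∧ dist (γ i x) (γ i y) ≤ c * dist x y)
    (hss : ∀ x : K, ∃ (i : Fin N) (y : K), γ i y = x) :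
    ∀ μ ν : Measure K, IsProbabilityMeasure μ → IsProbabilityMeasure ν →
      Ldist (Gstar γ μ) (Gstar γ ν) ≤ c * Ldist μ ν := by
  intro μ ν _ _
  have : NeZero N := ⟨by omega⟩
  lift c to ℝ≥0 using hc'pos.le.trans hc'c
  exact Gstar_contraction_general
    (fun j => .of_dist_le_mul fun x y => (hcontr j x y).2) μ ν (by simp only [measure_univ])
end

section
/- A Borel probability measure μ on K lies in ⋂_{n=1}^∞ (G*)^n(P(K)) if and only if μ = μ_H; that is, (for every n ≥ 1 there exists a Borel probability measure ν on K with μ = (G*)^n(ν)) holds exactly when μ equals the Hutchinson measure μ_H. -/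
/-!
Dually to `G*`, let `G f = (1/N) Σⱼ f ∘ γⱼ` on functions, so that `∫ f d(G* μ) = ∫ G f dμ`. If `f`
is `L`-Lipschitz then `Gⁿ f` is `L cⁿ`-Lipschitz, hence oscillates by at most `L cⁿ diam K`. So the
integrals of `f` against `(G*)ⁿ ν₁` and `(G*)ⁿ ν₂` differ by at most `L cⁿ diam K`, whatever the
probability measures `ν₁, ν₂`. For `μ = (G*)ⁿ νₙ` and `μH = (G*)ⁿ μH`, letting `n → ∞` shows that
`μ` and `μH` agree on Lipschitz functions, and these determine a probability measure.
-/

open MeasureTheory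
open scoped BigOperators ENNReal

open Filter Metric
open scoped NNReal Topology

lemma dist_le_mul_diam_univ_of_lipschitzWith {X Y : Type*} [PseudoMetricSpace X] [BoundedSpace X]
    [PseudoMetricSpace Y] {L : ℝ≥0} {f : X → Y} (hf : LipschitzWith L f) (x y : X) :
    dist (f x) (f y) ≤ L * diam (Set.univ : Set X) :=
  hf.dist_le_mul_of_le <| dist_le_diam_of_mem BoundedSpace.bounded_univ (Set.mem_univ x)
    (Set.mem_univ y)

section Integrals

variable {X : Type*} [MeasurableSpace X]

lemma norm_integral_sub_integral_le_of_dist_le {E : Type*} [NormedAddCommGroup E] [NormedSpace ℝ E]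
    [CompleteSpace E] {μ ν : Measure X} [IsProbabilityMeasure μ] [IsProbabilityMeasure ν]
    {f : X → E} (hμ : Integrable f μ) (hν : Integrable f ν) {C : ℝ}
    (hC : ∀ x y, dist (f x) (f y) ≤ C) :
    ‖∫ x, f x ∂μ - ∫ x, f x ∂ν‖ ≤ C := by
  have sub_integral_le (x : X) : ‖f x - ∫ y, f y ∂ν‖ ≤ C := by
    have h : f x - ∫ y, f y ∂ν = ∫ y, (f x - f y) ∂ν := by
      simp [integral_sub (integrable_const (f x)) hν]
    rw [h]
    simpa using norm_integral_le_of_norm_le_const (μ := ν)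
      (.of_forall fun y ↦ (dist_eq_norm (f x) (f y)).symm.trans_le (hC x y))
  have h : ∫ x, f x ∂μ - ∫ x, f x ∂ν = ∫ x, (f x - ∫ y, f y ∂ν) ∂μ := by
    simp [integral_sub hμ (integrable_const _)]
  rw [h]
  simpa using norm_integral_le_of_norm_le_const (μ := μ) (.of_forall sub_integral_le)

lemma integrable_of_lipschitzWith_s16 [PseudoMetricSpace X] [BoundedSpace X] [OpensMeasurableSpace X]
    {L : ℝ≥0} {f : X → ℝ} (hf : LipschitzWith L f) (μ : Measure X) [IsFiniteMeasure μ] :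
    Integrable f μ := by
  obtain ⟨C, hC⟩ := (isBounded_range_iff.2
    ⟨_, dist_le_mul_diam_univ_of_lipschitzWith hf⟩).exists_norm_le
  exact .of_bound hf.continuous.measurable.aestronglyMeasurable C
    (.of_forall fun x ↦ hC _ ⟨x, rfl⟩)

lemma ext_of_forall_integral_eq_of_lipschitzWith [PseudoEMetricSpace X] [BorelSpace X]
    {μ ν : Measure X} [IsProbabilityMeasure μ] [IsProbabilityMeasure ν]
    (h : ∀ (L : ℝ≥0) (f : X → ℝ), LipschitzWith L f → (∃ C, ∀ x y, dist (f x) (f y) ≤ C) →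
      ∫ x, f x ∂μ = ∫ x, f x ∂ν) :
    μ = ν := by
  let μ' : ProbabilityMeasure X := ⟨μ, ‹_›⟩
  let ν' : ProbabilityMeasure X := ⟨ν, ‹_›⟩
  -- The constant sequence `μ` converges weakly to `ν`, and weak limits are unique.
  have h_tendsto : Tendsto (fun _ : ℕ ↦ μ') atTop (𝓝 ν') :=
    tendsto_iff_forall_lipschitz_integral_tendsto.2 fun f hbdd ⟨L, hf⟩ ↦
      tendsto_const_nhds.congr fun _ ↦ (h L f hf hbdd).symm
  have h_eq : μ' = ν' := tendsto_nhds_unique tendsto_const_nhds h_tendsto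
  exact congrArg Subtype.val h_eq

end Integrals

section Gstar

variable {K : Type*} {N : ℕ} {γ : Fin N → K → K}

/-- The Markov operator `G f = (1/N)·Σⱼ f ∘ γⱼ` on observables, of which `G*` is the dual. -/
noncomputable def branchAverage (γ : Fin N → K → K) (f : K → ℝ) (x : K) : ℝ :=
  (N : ℝ)⁻¹ * ∑ j, f (γ j x)

section MeasurableSpace

variable [MeasurableSpace K]

instance isFiniteMeasure_Gstar (μ : Measure K) [IsFiniteMeasure μ] :
    IsFiniteMeasure (Gstar γ μ) := by
  obtain rfl | hN := eq_or_ne N 0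
  · simpa [Gstar] using (inferInstance : IsFiniteMeasure (0 : Measure K))
  · exact Measure.smul_finite _ (by simpa using hN)

lemma integral_Gstar_s16 {μ : Measure K} {f : K → ℝ} (hγ : ∀ j, AEMeasurable (γ j) μ)
    (hf : ∀ j, Integrable f (μ.map (γ j))) :
    ∫ x, f x ∂(Gstar γ μ) = ∫ x, branchAverage γ f x ∂μ := by
  have integrable_comp (j : Fin N) : Integrable (fun x ↦ f (γ j x)) μ :=
    (hf j).comp_aemeasurable (hγ j)
  calc ∫ x, f x ∂(Gstar γ μ)
      = (N : ℝ)⁻¹ * ∑ j, ∫ x, f x ∂(μ.map (γ j)) := by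
        rw [Gstar, integral_smul_measure, integral_finsetSum_measure fun j _ ↦ hf j]
        simp
    _ = (N : ℝ)⁻¹ * ∑ j, ∫ x, f (γ j x) ∂μ := by
        simp only [fun j ↦ integral_map (hγ j) (hf j).aestronglyMeasurable]
    _ = ∫ x, branchAverage γ f x ∂μ := by
        simp only [branchAverage, integral_const_mul,
          integral_finsetSum _ fun j _ ↦ integrable_comp j]

end MeasurableSpace

section PseudoMetricSpace

variable [PseudoMetricSpace K] {c L : ℝ≥0} {f : K → ℝ}

lemma lipschitzWith_branchAverage (hγ : ∀ j, LipschitzWith c (γ j)) (hf : LipschitzWith L f) :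
    LipschitzWith (L * c) (branchAverage γ f) := by
  refine .of_dist_le_mul fun x y ↦ ?_
  calc dist (branchAverage γ f x) (branchAverage γ f y)
      = (N : ℝ)⁻¹ * dist (∑ j, f (γ j x)) (∑ j, f (γ j y)) := by
        simp [branchAverage, Real.dist_eq, ← mul_sub, abs_mul]
    _ ≤ (N : ℝ)⁻¹ * ∑ _j : Fin N, (L * c : ℝ≥0) * dist x y := by
        gcongr
        exact dist_sum_sum_le_of_le _ fun j _ ↦ (hf.comp (hγ j)).dist_le_mul x y
    _ = ((N : ℝ)⁻¹ * N) * ((L * c : ℝ≥0) * dist x y) := by simp [mul_assoc]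
    _ ≤ (L * c : ℝ≥0) * dist x y := mul_le_of_le_one_left (by positivity) inv_mul_le_one

lemma lipschitzWith_iterate_branchAverage (hγ : ∀ j, LipschitzWith c (γ j))
    (hf : LipschitzWith L f) (n : ℕ) :
    LipschitzWith (L * c ^ n) ((branchAverage γ)^[n] f) := by
  induction n with
  | zero => simpa
  | succ n ih =>
    rw [Function.iterate_succ_apply', pow_succ, ← mul_assoc]
    exact lipschitzWith_branchAverage hγ ih

variable [BoundedSpace K] [MeasurableSpace K] [BorelSpace K]

lemma integral_iterate_Gstar (hγ : ∀ j, LipschitzWith c (γ j)) (hf : LipschitzWith L f) (n : ℕ)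
    (μ : Measure K) [IsFiniteMeasure μ] :
    ∫ x, f x ∂((Gstar γ)^[n] μ) = ∫ x, (branchAverage γ)^[n] f x ∂μ := by
  induction n generalizing μ with
  | zero => rfl
  | succ n ih =>
    rw [Function.iterate_succ_apply, ih, Function.iterate_succ_apply']
    exact integral_Gstar_s16 (fun j ↦ (hγ j).continuous.aemeasurable) fun j ↦
      integrable_of_lipschitzWith_s16 (lipschitzWith_iterate_branchAverage hγ hf n) _

lemma abs_integral_iterate_Gstar_sub_le (hγ : ∀ j, LipschitzWith c (γ j)) (hf : LipschitzWith L f)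
    (n : ℕ) (μ ν : Measure K) [IsProbabilityMeasure μ] [IsProbabilityMeasure ν] :
    |∫ x, f x ∂((Gstar γ)^[n] μ) - ∫ x, f x ∂((Gstar γ)^[n] ν)| ≤
      L * c ^ n * diam (Set.univ : Set K) := by
  have hfn := lipschitzWith_iterate_branchAverage hγ hf n
  rw [integral_iterate_Gstar hγ hf, integral_iterate_Gstar hγ hf]
  exact_mod_cast norm_integral_sub_integral_le_of_dist_le (integrable_of_lipschitzWith_s16 hfn μ)
    (integrable_of_lipschitzWith_s16 hfn ν) (dist_le_mul_diam_univ_of_lipschitzWith hfn)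

theorem mem_iInter_Gstar_iff_eq_hutchinson_general (hc : c < 1) (hγ : ∀ j, LipschitzWith c (γ j))
    {μH : Measure K} [IsProbabilityMeasure μH] (hμH : Gstar γ μH = μH)
    {μ : Measure K} [IsProbabilityMeasure μ] :
    (∀ n : ℕ, 1 ≤ n → ∃ ν : Measure K, IsProbabilityMeasure ν ∧ μ = (Gstar γ)^[n] ν) ↔
      μ = μH := by
  have hfix (n : ℕ) : (Gstar γ)^[n] μH = μH := Function.iterate_fixed hμH n
  refine ⟨fun h ↦ ?_, fun h n _ ↦ ⟨μH, ‹_›, h.trans (hfix n).symm⟩⟩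
  refine ext_of_forall_integral_eq_of_lipschitzWith fun L f hf _ ↦ eq_of_abs_sub_nonpos ?_
  have h_bound (n : ℕ) (hn : 1 ≤ n) :
      |∫ x, f x ∂μ - ∫ x, f x ∂μH| ≤ L * c ^ n * diam (Set.univ : Set K) := by
    obtain ⟨ν, _, rfl⟩ := h n hn
    simpa only [hfix n] using abs_integral_iterate_Gstar_sub_le hγ hf n ν μH
  have h_lim : Tendsto (fun n : ℕ ↦ L * c ^ n * diam (Set.univ : Set K)) atTop (𝓝 0) := by
    simpa using ((tendsto_pow_atTop_nhds_zero_of_lt_one c.coe_nonneg hc).const_mul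
      (L : ℝ)).mul_const (diam (Set.univ : Set K))
  exact ge_of_tendsto h_lim (eventually_atTop.2 ⟨1, h_bound⟩)

end PseudoMetricSpace

end Gstar

/-- A Borel probability measure `μ` on `K` lies in
`⋂_{n≥1} (G*)^n(P(K))` if and only if `μ = μ_H`, the Hutchinson measure. -/
theorem mem_iInter_Gstar_iff_eq_hutchinson
    {K : Type*} [MetricSpace K] [CompactSpace K]
    [MeasurableSpace K] [BorelSpace K]
    (N : ℕ) (hN : 2 ≤ N)
    (γ : Fin N → K → K)
    (c c' : ℝ) (hc'pos : 0 < c') (hc'c : c' ≤ c) (hc1 : c < 1)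
    (hcontr : ∀ (i : Fin N) (x y : K),
      c' * dist x y ≤ dist (γ i x) (γ i y) ∧ dist (γ i x) (γ i y) ≤ c * dist x y)
    (hss : ∀ x : K, ∃ (i : Fin N) (y : K), γ i y = x)
    (μH : Measure K) (hμHprob : IsProbabilityMeasure μH)
    (hμHfix : Gstar γ μH = μH)
    (hμHuniq : ∀ ν : Measure K, IsProbabilityMeasure ν → Gstar γ ν = ν → ν = μH) :
    ∀ μ : Measure K, IsProbabilityMeasure μ →
      ((∀ n : ℕ, 1 ≤ n → ∃ ν : Measure K, IsProbabilityMeasure ν ∧ μ = (Gstar γ)^[n] ν) ↔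
        μ = μH) := by
  lift c to ℝ≥0 using hc'pos.le.trans hc'c
  exact fun _ _ ↦ mem_iInter_Gstar_iff_eq_hutchinson_general hc1
    (fun j ↦ .of_dist_le_mul fun x y ↦ (hcontr j x y).2) hμHfix
end

section
/- If (μ_n)_{n≥0} is a sequence of Borel probability measures on K satisfying G*(μ_{n+1}) = μ_n for every n ≥ 0, then μ_n = μ_H for every n, where μ_H is the Hutchinson measure. -/
/-!
The operator `Gstar γ` on measures is dual to the averaging operator `T f = (1/N) Σⱼ f ∘ γⱼ` on
functions, and `T` multiplies Lipschitz constants by the contraction ratio `c`. If `f` is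
`L`-Lipschitz, then `Tⁿ f` oscillates by at most `L cⁿ diam K`, so its integrals against any two
probability measures differ by at most that much. Two inverse orbits `μ`, `ν` of `Gstar γ` satisfy
`∫ f dμₘ - ∫ f dνₘ = ∫ Tⁿ f dμₘ₊ₙ - ∫ Tⁿ f dνₘ₊ₙ` for all `n`, hence their Lipschitz integrals
agree, and these determine the measures. The constant sequence at the Hutchinson measure is one
such orbit.
-/

open MeasureTheory
open scoped BigOperators ENNReal

open Filter Set Topology
open scoped NNReal BoundedContinuousFunction

lemma iterate_apply_add_of_forall_apply_succ_eq {α : Type*} {g : α → α} {a : ℕ → α}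
    (h : ∀ n, g (a (n + 1)) = a n) (m n : ℕ) : g^[n] (a (m + n)) = a m := by
  induction n with
  | zero => rfl
  | succ n ih => rw [Function.iterate_succ_apply, ← add_assoc, h, ih]

section Integrals

variable {Ω : Type*} [MeasurableSpace Ω] {μ ν : Measure Ω}

lemma dist_integral_integral_le_of_forall_dist_le {E : Type*} [NormedAddCommGroup E]
    [NormedSpace ℝ E] [CompleteSpace E] [IsProbabilityMeasure μ] [IsProbabilityMeasure ν]
    {f : Ω → E} {C : ℝ} (hμ : Integrable f μ) (hν : Integrable f ν)
    (hf : ∀ x y, dist (f x) (f y) ≤ C) : dist (∫ x, f x ∂μ) (∫ x, f x ∂ν) ≤ C := by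
  have dist_integral_le {ρ : Measure Ω} [IsProbabilityMeasure ρ] (hρ : Integrable f ρ) (a : E)
      (ha : ∀ x, dist (f x) a ≤ C) : dist (∫ x, f x ∂ρ) a ≤ C := by
    have h := norm_integral_le_of_norm_le_const (μ := ρ) (f := fun x => f x - a)
      (ae_of_all _ fun x => (dist_eq_norm (f x) a).symm.trans_le (ha x))
    rw [integral_sub hρ (integrable_const a)] at h
    simpa [dist_eq_norm] using h
  refine dist_integral_le hμ _ fun x => ?_
  rw [dist_comm]
  exact dist_integral_le hν _ fun y => hf y x

lemma ext_of_forall_lipschitzWith_integral_eq [PseudoEMetricSpace Ω] [BorelSpace Ω]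
    [IsFiniteMeasure μ] [IsFiniteMeasure ν]
    (h : ∀ (f : Ω →ᵇ ℝ) (L : ℝ≥0), LipschitzWith L f → ∫ x, f x ∂μ = ∫ x, f x ∂ν) : μ = ν := by
  have h_closed (F : Set Ω) (hF : IsClosed F) : μ F = ν F := by
    have hδ (n : ℕ) : (0 : ℝ) < 1 / (n + 1) := Nat.one_div_pos_of_nat
    have hμ := tendsto_integral_thickenedIndicator_of_isClosed μ hF hδ
      tendsto_one_div_add_atTop_nhds_zero_nat
    have hν := tendsto_integral_thickenedIndicator_of_isClosed ν hF hδ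
      tendsto_one_div_add_atTop_nhds_zero_nat
    have h_eq (n : ℕ) : ∫ x, (thickenedIndicator (hδ n) F x : ℝ) ∂μ =
        ∫ x, (thickenedIndicator (hδ n) F x : ℝ) ∂ν :=
      h ((thickenedIndicator (hδ n) F).comp _ NNReal.isometry_coe.lipschitz) _
        (NNReal.isometry_coe.lipschitz.comp (lipschitzWith_thickenedIndicator (hδ n) F))
    simp only [h_eq] at hμ
    exact (measureReal_eq_measureReal_iff).1 (tendsto_nhds_unique hμ hν)
  refine ext_of_generate_finite _ ?_ isPiSystem_isClosed h_closed (h_closed univ isClosed_univ)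
  rw [BorelSpace.measurable_eq (α := Ω), borel_eq_generateFrom_isClosed]

end Integrals

/-- The averaging operator `T f = (1/N) Σⱼ f ∘ γⱼ` on real functions, to which `Gstar γ` is dual:
`∫ T f dμ = ∫ f d(Gstar γ μ)`. -/
noncomputable def avgOp {K : Type*} {N : ℕ} (γ : Fin N → K → K) (f : K → ℝ) : K → ℝ :=
  fun x => (N : ℝ)⁻¹ * ∑ j, f (γ j x)

section Duality

variable {K : Type*} [MeasurableSpace K] {N : ℕ} {γ : Fin N → K → K} {μ : Measure K} {f : K → ℝ}

lemma integrable_map_of_integrable_Gstar (hf : Integrable f (Gstar γ μ)) (j : Fin N) :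
    Integrable f (Measure.map (γ j) μ) := by
  have hN : (N : ℝ≥0∞) ≠ 0 := Nat.cast_ne_zero.2 j.pos.ne'
  rw [Gstar, integrable_smul_measure (ENNReal.inv_ne_zero.2 (ENNReal.natCast_ne_top N))
    (ENNReal.inv_ne_top.2 hN), integrable_finsetSum_measure] at hf
  exact hf j (Finset.mem_univ j)

lemma integrable_avgOp (hγ : ∀ j, Measurable (γ j)) (hf : Integrable f (Gstar γ μ)) :
    Integrable (avgOp γ f) μ :=
  (integrable_finsetSum _ fun j _ =>
    (integrable_map_of_integrable_Gstar hf j).comp_measurable (hγ j)).const_mul _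

lemma integral_avgOp (hγ : ∀ j, Measurable (γ j)) (hf : Integrable f (Gstar γ μ)) :
    ∫ x, avgOp γ f x ∂μ = ∫ x, f x ∂(Gstar γ μ) := by
  have hf_map := integrable_map_of_integrable_Gstar hf
  calc ∫ x, avgOp γ f x ∂μ = (N : ℝ)⁻¹ * ∑ j, ∫ x, f (γ j x) ∂μ := by
        simp only [avgOp]
        rw [integral_const_mul, integral_finsetSum]
        exact fun j _ => (hf_map j).comp_measurable (hγ j)
    _ = (N : ℝ)⁻¹ * ∑ j, ∫ x, f x ∂(Measure.map (γ j) μ) := by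
        congr! 2 with j
        exact (integral_map (hγ j).aemeasurable (hf_map j).aestronglyMeasurable).symm
    _ = ∫ x, f x ∂(Gstar γ μ) := by
        rw [Gstar, integral_smul_measure, integral_finsetSum_measure fun j _ => hf_map j]
        simp

lemma integrable_iterate_avgOp (hγ : ∀ j, Measurable (γ j)) (n : ℕ)
    (hf : Integrable f ((Gstar γ)^[n] μ)) : Integrable ((avgOp γ)^[n] f) μ := by
  induction n generalizing μ with
  | zero => exact hf
  | succ n ih =>
    rw [Function.iterate_succ_apply']
    exact integrable_avgOp hγ (ih hf)

lemma integral_iterate_avgOp (hγ : ∀ j, Measurable (γ j)) (n : ℕ)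
    (hf : Integrable f ((Gstar γ)^[n] μ)) :
    ∫ x, (avgOp γ)^[n] f x ∂μ = ∫ x, f x ∂((Gstar γ)^[n] μ) := by
  induction n generalizing μ with
  | zero => rfl
  | succ n ih =>
    rw [Function.iterate_succ_apply', integral_avgOp hγ (integrable_iterate_avgOp hγ n hf)]
    exact ih hf

end Duality

section Contraction

variable {K : Type*} [PseudoMetricSpace K] {N : ℕ} {γ : Fin N → K → K} {c L : ℝ≥0} {f : K → ℝ}

lemma lipschitzWith_avgOp (hγ : ∀ j, LipschitzWith c (γ j)) (hf : LipschitzWith L f) :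
    LipschitzWith (L * c) (avgOp γ f) := by
  refine LipschitzWith.of_dist_le_mul fun x y => ?_
  calc dist (avgOp γ f x) (avgOp γ f y)
      = (N : ℝ)⁻¹ * dist (∑ j, f (γ j x)) (∑ j, f (γ j y)) := by
        simp [avgOp, Real.dist_eq, ← mul_sub, abs_mul]
    _ ≤ (N : ℝ)⁻¹ * ∑ _j : Fin N, ↑(L * c) * dist x y := by
        gcongr
        exact dist_sum_sum_le_of_le _ fun j _ => (hf.comp (hγ j)).dist_le_mul x y
    _ = ((N : ℝ)⁻¹ * N) * (↑(L * c) * dist x y) := by simp [mul_assoc]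
    _ ≤ ↑(L * c) * dist x y := mul_le_of_le_one_left (by positivity) inv_mul_le_one

lemma lipschitzWith_iterate_avgOp (hγ : ∀ j, LipschitzWith c (γ j)) (hf : LipschitzWith L f)
    (n : ℕ) : LipschitzWith (L * c ^ n) ((avgOp γ)^[n] f) := by
  induction n with
  | zero => simpa using hf
  | succ n ih =>
    rw [Function.iterate_succ_apply', pow_succ, ← mul_assoc]
    exact lipschitzWith_avgOp hγ ih

variable [BoundedSpace K] [MeasurableSpace K] [BorelSpace K]

lemma dist_integral_iterate_Gstar_le (hγ : ∀ j, LipschitzWith c (γ j)) (hf : LipschitzWith L f)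
    {μ ν : Measure K} [IsProbabilityMeasure μ] [IsProbabilityMeasure ν] (n : ℕ)
    (hμ : Integrable f ((Gstar γ)^[n] μ)) (hν : Integrable f ((Gstar γ)^[n] ν)) :
    dist (∫ x, f x ∂((Gstar γ)^[n] μ)) (∫ x, f x ∂((Gstar γ)^[n] ν)) ≤
      L * c ^ n * Metric.diam (univ : Set K) := by
  have hγ_meas (j : Fin N) : Measurable (γ j) := (hγ j).continuous.measurable
  rw [← integral_iterate_avgOp hγ_meas n hμ, ← integral_iterate_avgOp hγ_meas n hν]
  refine dist_integral_integral_le_of_forall_dist_le (integrable_iterate_avgOp hγ_meas n hμ)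
    (integrable_iterate_avgOp hγ_meas n hν) fun x y => ?_
  calc dist ((avgOp γ)^[n] f x) ((avgOp γ)^[n] f y) ≤ ↑(L * c ^ n) * dist x y :=
        (lipschitzWith_iterate_avgOp hγ hf n).dist_le_mul x y
    _ ≤ L * c ^ n * Metric.diam (univ : Set K) := by
        push_cast
        gcongr
        exact Metric.dist_le_diam_of_mem (Bornology.isBounded_univ.2 inferInstance)
          (mem_univ x) (mem_univ y)

theorem inverse_limit_eq_hutchinson_general (hγ : ∀ j, LipschitzWith c (γ j)) (hc : c < 1)
    {μ ν : ℕ → Measure K} [∀ n, IsProbabilityMeasure (μ n)] [∀ n, IsProbabilityMeasure (ν n)]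
    (hμ : ∀ n, Gstar γ (μ (n + 1)) = μ n) (hν : ∀ n, Gstar γ (ν (n + 1)) = ν n) (m : ℕ) :
    μ m = ν m := by
  refine ext_of_forall_lipschitzWith_integral_eq fun f L hf => ?_
  have iterate_μ (n : ℕ) : (Gstar γ)^[n] (μ (m + n)) = μ m :=
    iterate_apply_add_of_forall_apply_succ_eq hμ m n
  have iterate_ν (n : ℕ) : (Gstar γ)^[n] (ν (m + n)) = ν m :=
    iterate_apply_add_of_forall_apply_succ_eq hν m n
  have hdist (n : ℕ) : dist (∫ x, f x ∂(μ m)) (∫ x, f x ∂(ν m)) ≤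
      L * c ^ n * Metric.diam (univ : Set K) := by
    rw [← iterate_μ n, ← iterate_ν n]
    apply dist_integral_iterate_Gstar_le hγ hf n
    · exact iterate_μ n ▸ f.integrable (μ m)
    · exact iterate_ν n ▸ f.integrable (ν m)
  have hlim : Tendsto (fun n : ℕ => L * c ^ n * Metric.diam (univ : Set K)) atTop (𝓝 0) := by
    simpa using ((tendsto_pow_atTop_nhds_zero_of_lt_one c.coe_nonneg
      (NNReal.coe_lt_one.2 hc)).const_mul (L : ℝ)).mul_const (Metric.diam (univ : Set K))
  exact dist_le_zero.1 (ge_of_tendsto' hlim hdist)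

end Contraction

/-- If `(μₙ)` is a sequence of Borel probability measures on `K` satisfying
`G*(μ_{n+1}) = μₙ` for every `n ≥ 0`, then `μₙ = μ_H` for every `n`, where `μ_H` is the
Hutchinson measure (the unique `G*`-fixed Borel probability measure). -/
theorem inverse_limit_eq_hutchinson
    {K : Type*} [MetricSpace K] [CompactSpace K]
    [MeasurableSpace K] [BorelSpace K]
    (N : ℕ) (hN : 2 ≤ N)
    (γ : Fin N → K → K)
    (c c' : ℝ) (hc'pos : 0 < c') (hc'c : c' ≤ c) (hc1 : c < 1)
    (hcontr : ∀ (i : Fin N) (x y : K),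
      c' * dist x y ≤ dist (γ i x) (γ i y) ∧ dist (γ i x) (γ i y) ≤ c * dist x y)
    (hss : ∀ x : K, ∃ (i : Fin N) (y : K), γ i y = x)
    (μH : Measure K) (hμHprob : IsProbabilityMeasure μH)
    (hμHfix : Gstar γ μH = μH)
    (hμHuniq : ∀ ν : Measure K, IsProbabilityMeasure ν → Gstar γ ν = ν → ν = μH)
    (μ : ℕ → Measure K) (hprob : ∀ n, IsProbabilityMeasure (μ n))
    (hrec : ∀ n : ℕ, Gstar γ (μ (n + 1)) = μ n) :
    ∀ n : ℕ, μ n = μH := by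
  exact inverse_limit_eq_hutchinson_general (c := c.toNNReal)
    (fun j => LipschitzWith.of_dist_le' fun x y => (hcontr j x y).2) (Real.toNNReal_lt_one.2 hc1)
    hrec fun _ => hμHfix
end

section
/- Let A be a unital C*-algebra, B a closed *-subalgebra of A containing the unit, and I a closed two-sided ideal of A such that A = B + I. Let τ be a finite trace on B and φ a finite trace on I, and suppose: (1) φ(x) = τ(x) for every x ∈ B ∩ I; and (2) φ(x^{1/2}·u·x^{1/2}) ≤ τ(x) for every positive x ∈ B and every u ∈ I with 0 ≤ u ≤ 1 (this encodes that the canonical extension φ̄ of φ to A satisfies φ̄ ≤ τ on positive elements of B). Then there exists a unique finite trace σ on A whose restriction to B is τ and whose restriction to I is φ. Conversely, if σ is a finite trace on A, then its restrictions τ = σ|_B and φ = σ|_I satisfy conditions (1) and (2). -/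
/-!
Since `A = B + I` and `φ = τ` on `B ∩ I`, the formula `σ (b + i) = τ b + φ i` defines the only
candidate. What remains rests on one fact: every `x ∈ I` is the limit of `x * e n` for positive
contractions `e n ∈ I`. Hence `I`, being closed, is self-adjoint, and by continuity
`φ (a * i) = lim φ ((a * i) * e n) = lim φ (i * (e n * a)) = φ (i * a)` for all `a ∈ A`, so `σ` is
tracial. For positivity write `a = b + i` and `a⋆a = b⋆b + c` with `c ∈ I`. For a positive
contraction `e ∈ I`, condition (2) with `u = e²` gives `φ (e b⋆b e) ≤ τ (b⋆b)`, whence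
`0 ≤ φ (e a⋆a e) ≤ τ (b⋆b) + φ (e c e)`; the right-hand side tends to `τ (b⋆b) + φ c = σ (a⋆a)`
along the `e n` belonging to `c`. Boundedness of `σ` is then automatic.
-/

/-- A finite trace on a subset `S` of a C*-algebra `A`, modelled as a function `A → ℂ` which is
linear, bounded, positive and tracial on `S`. -/
def IsFiniteTraceOn {A : Type*} [CStarAlgebra A] (S : Set A) (f : A → ℂ) : Prop :=
  (∀ x ∈ S, ∀ y ∈ S, f (x + y) = f x + f y) ∧
  (∀ z : ℂ, ∀ x ∈ S, f (z • x) = z * f x) ∧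
  (∃ M : ℝ, ∀ x ∈ S, ‖f x‖ ≤ M * ‖x‖) ∧
  (∀ x ∈ S, 0 ≤ (f (star x * x)).re ∧ (f (star x * x)).im = 0) ∧
  (∀ x ∈ S, ∀ y ∈ S, f (x * y) = f (y * x))

open Filter Topology

theorem exists_linearMap_extending_of_codisjoint {R E F : Type*} [Ring R] [AddCommGroup E]
    [Module R E] [AddCommGroup F] [Module R F] {p q : Submodule R E} (hpq : Codisjoint p q)
    (f : p →ₗ[R] F) (g : q →ₗ[R] F) (hfg : ∀ (x : p) (y : q), (x : E) = y → f x = g y) :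
    ∃ L : E →ₗ[R] F, (∀ x : p, L x = f x) ∧ ∀ y : q, L y = g y := by
  let f' : E →ₗ.[R] F := ⟨p, f⟩
  let g' : E →ₗ.[R] F := ⟨q, g⟩
  have hmem (x : E) : x ∈ (f'.sup g' hfg).domain := hpq.eq_top.ge Submodule.mem_top
  exact ⟨(f'.sup g' hfg).toFun ∘ₗ LinearMap.id.codRestrict _ hmem,
    fun x => ((f'.left_le_sup g' hfg).2 rfl).symm, fun y => ((f'.right_le_sup g' hfg).2 rfl).symm⟩

theorem map_mul_comm_of_forall_exists_add {R M : Type*} [NonUnitalNonAssocSemiring R]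
    [AddCommMonoid M] (f : R →+ M) {S T : Set R} (hST : ∀ x, ∃ s ∈ S, ∃ t ∈ T, x = s + t)
    (hS : ∀ x ∈ S, ∀ y ∈ S, f (x * y) = f (y * x)) (hT : ∀ x, ∀ t ∈ T, f (x * t) = f (t * x))
    (x y : R) : f (x * y) = f (y * x) := by
  obtain ⟨s, hs, t, ht, rfl⟩ := hST x
  obtain ⟨s', hs', t', ht', rfl⟩ := hST y
  simp only [add_mul, mul_add, map_add]
  rw [hS s hs s' hs', hT s t' ht', ← hT s' t ht, hT t t' ht']
  abel

section RightApproxUnit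

variable {A : Type*} [CStarAlgebra A]

/-- The regularised support projection `x⋆x (δ + x⋆x)⁻¹` of `x`, a right approximate unit for `x`
as `δ` decreases to `0`. -/
noncomputable def rightApproxUnit (x : A) (δ : ℝ) : A :=
  cfc (fun t : ℝ => (δ + t)⁻¹ * t) (star x * x)

variable {x : A} {δ : ℝ}

theorem continuousOn_inv_add_spectrum_star_mul_self (x : A) (hδ : 0 < δ) :
    ContinuousOn (fun t : ℝ => (δ + t)⁻¹) (spectrum ℝ (star x * x)) :=
  ContinuousOn.inv₀ (by fun_prop) fun t ht =>
    (add_pos_of_pos_of_nonneg hδ (spectrum_star_mul_self_nonneg t ht)).ne'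

theorem rightApproxUnit_mem {I : Ideal A} (hx : x ∈ I) (hδ : 0 < δ) : rightApproxUnit x δ ∈ I := by
  rw [rightApproxUnit, cfc_mul _ _ _ (continuousOn_inv_add_spectrum_star_mul_self x hδ),
    cfc_id' ℝ (star x * x)]
  exact I.mul_mem_left _ (I.mul_mem_left _ hx)

theorem one_sub_rightApproxUnit (x : A) (hδ : 0 < δ) :
    1 - rightApproxUnit x δ = cfc (fun t : ℝ => δ * (δ + t)⁻¹) (star x * x) := by
  have hcont := continuousOn_inv_add_spectrum_star_mul_self x hδ
  rw [rightApproxUnit, ← cfc_const_one ℝ (star x * x),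
    ← cfc_sub _ _ _ (by fun_prop) (hcont.fun_mul (continuousOn_id' _))]
  refine cfc_congr fun t ht => ?_
  have := spectrum_star_mul_self_nonneg t ht
  field_simp
  ring

variable [PartialOrder A] [StarOrderedRing A]

theorem rightApproxUnit_nonneg (x : A) (hδ : 0 < δ) : 0 ≤ rightApproxUnit x δ :=
  cfc_nonneg fun t ht => by
    have := spectrum_star_mul_self_nonneg t ht
    positivity

theorem rightApproxUnit_le_one (x : A) (hδ : 0 < δ) : rightApproxUnit x δ ≤ 1 :=
  cfc_le_one _ _ fun t ht => by
    have := spectrum_star_mul_self_nonneg t ht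
    rw [inv_mul_le_one₀ (by positivity)]
    linarith

theorem norm_sub_mul_rightApproxUnit_sq_le (x : A) (hδ : 0 < δ) :
    ‖x - x * rightApproxUnit x δ‖ ^ 2 ≤ δ := by
  have hcont : ContinuousOn (fun t : ℝ => δ * (δ + t)⁻¹) (spectrum ℝ (star x * x)) :=
    continuousOn_const.mul (continuousOn_inv_add_spectrum_star_mul_self x hδ)
  have hsa : star (1 - rightApproxUnit x δ) = 1 - rightApproxUnit x δ := by
    simp [(rightApproxUnit_nonneg x hδ).isSelfAdjoint.star_eq]
  have hcfc : star (x - x * rightApproxUnit x δ) * (x - x * rightApproxUnit x δ) =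
      cfc (fun t : ℝ => δ * (δ + t)⁻¹ * t * (δ * (δ + t)⁻¹)) (star x * x) := by
    rw [← mul_one_sub, star_mul, hsa, mul_assoc, ← mul_assoc (star x), ← mul_assoc,
      one_sub_rightApproxUnit x hδ, cfc_mul _ _ _ (hcont.fun_mul (continuousOn_id' _)) hcont,
      cfc_mul _ _ _ hcont (continuousOn_id' _), cfc_id' ℝ (star x * x)]
  rw [sq, ← CStarRing.norm_star_mul_self, hcfc]
  refine norm_cfc_le hδ.le fun t ht => ?_
  have ht0 := spectrum_star_mul_self_nonneg t ht
  rw [Real.norm_of_nonneg (by positivity)]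
  calc δ * (δ + t)⁻¹ * t * (δ * (δ + t)⁻¹) = δ * (δ * t / (δ + t) ^ 2) := by field_simp
    _ ≤ δ := mul_le_of_le_one_right hδ.le <| (div_le_one (by positivity)).2 (by nlinarith)

theorem tendsto_mul_rightApproxUnit (x : A) :
    Tendsto (fun δ => x * rightApproxUnit x δ) (𝓝[>] 0) (𝓝 x) := by
  have hsqrt : Tendsto Real.sqrt (𝓝[>] 0) (𝓝 0) := by
    simpa using (Real.continuous_sqrt.tendsto 0).mono_left nhdsWithin_le_nhds
  refine tendsto_iff_norm_sub_tendsto_zero.2 <|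
    squeeze_zero' (.of_forall fun _ => norm_nonneg _) ?_ hsqrt
  filter_upwards [self_mem_nhdsWithin] with δ hδ
  rw [norm_sub_rev]
  exact Real.le_sqrt_of_sq_le (norm_sub_mul_rightApproxUnit_sq_le x hδ)

theorem exists_seq_tendsto_mul_of_mem {I : Ideal A} (hx : x ∈ I) :
    ∃ e : ℕ → A, (∀ n, e n ∈ I) ∧ (∀ n, 0 ≤ e n) ∧ (∀ n, e n ≤ 1) ∧
      Tendsto (fun n => x * e n) atTop (𝓝 x) := by
  obtain ⟨δ, -, hδ, hlim⟩ := exists_seq_strictAnti_tendsto' (zero_lt_one (α := ℝ))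
  have hδ0 (n : ℕ) : 0 < δ n := (hδ n).1
  exact ⟨fun n => rightApproxUnit x (δ n), fun n => rightApproxUnit_mem hx (hδ0 n),
    fun n => rightApproxUnit_nonneg x (hδ0 n), fun n => rightApproxUnit_le_one x (hδ0 n),
    (tendsto_mul_rightApproxUnit x).comp
      (tendsto_nhdsWithin_iff.2 ⟨hlim, .of_forall hδ0⟩)⟩

theorem star_mem_of_isClosed {I : Ideal A} [I.IsTwoSided] (hI : IsClosed (I : Set A))
    (hx : x ∈ I) : star x ∈ I := by
  obtain ⟨e, he, he0, -, hlim⟩ := exists_seq_tendsto_mul_of_mem hx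
  refine hI.mem_of_tendsto hlim.star (.of_forall fun n => ?_)
  rw [star_mul, (he0 n).isSelfAdjoint.star_eq]
  exact I.mul_mem_right _ (he n)

end RightApproxUnit

namespace IsFiniteTraceOn

open scoped ComplexOrder

variable {A : Type*} [CStarAlgebra A]

section Basic

variable {S : Set A} {f : A → ℂ} {x y : A}

theorem map_add (hf : IsFiniteTraceOn S f) (hx : x ∈ S) (hy : y ∈ S) : f (x + y) = f x + f y :=
  hf.1 x hx y hy

theorem map_smul (hf : IsFiniteTraceOn S f) (z : ℂ) (hx : x ∈ S) : f (z • x) = z * f x :=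
  hf.2.1 z x hx

theorem exists_bound (hf : IsFiniteTraceOn S f) : ∃ M : ℝ, ∀ x ∈ S, ‖f x‖ ≤ M * ‖x‖ :=
  hf.2.2.1

theorem map_star_mul_self_nonneg (hf : IsFiniteTraceOn S f) (hx : x ∈ S) :
    0 ≤ f (star x * x) :=
  Complex.nonneg_iff.2 ⟨(hf.2.2.2.1 x hx).1, (hf.2.2.2.1 x hx).2.symm⟩

theorem map_mul_comm (hf : IsFiniteTraceOn S f) (hx : x ∈ S) (hy : y ∈ S) :
    f (x * y) = f (y * x) :=
  hf.2.2.2.2 x hx y hy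

end Basic

section Submodule

variable {S : Submodule ℂ A} {f : A → ℂ}

/-- A finite trace on a subspace `S`, restricted to a linear functional on `S`. -/
def toLinearMap (hf : IsFiniteTraceOn (S : Set A) f) : S →ₗ[ℂ] ℂ where
  toFun x := f x
  map_add' x y := hf.map_add x.2 y.2
  map_smul' z x := hf.map_smul z x.2

theorem continuousOn (hf : IsFiniteTraceOn (S : Set A) f) : ContinuousOn f S := by
  obtain ⟨M, hM⟩ := hf.exists_bound
  exact continuousOn_iff_continuous_domRestrict.2
    (hf.toLinearMap.mkContinuous M fun x => hM x x.2).continuous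

end Submodule

section Univ

variable [PartialOrder A] [StarOrderedRing A] {σ : A → ℂ}

theorem univ_of_nonneg (L : A →ₗ[ℂ] ℂ) (hpos : ∀ x, 0 ≤ L (star x * x))
    (hcomm : ∀ x y, L (x * y) = L (y * x)) : IsFiniteTraceOn Set.univ L := by
  have hmono (x : A) (hx : 0 ≤ x) : 0 ≤ L x := by
    obtain ⟨y, rfl⟩ := CStarAlgebra.nonneg_iff_eq_star_mul_self.1 hx
    exact hpos y
  obtain ⟨M, hM⟩ := (PositiveLinearMap.mk₀ L hmono).exists_norm_apply_le
  exact ⟨fun x _ y _ => L.map_add x y, fun z x _ => L.map_smul z x, ⟨M, fun x _ => hM x⟩,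
    fun x _ => ⟨(Complex.nonneg_iff.1 (hpos x)).1, (Complex.nonneg_iff.1 (hpos x)).2.symm⟩,
    fun x _ y _ => hcomm x y⟩

theorem monotone (hσ : IsFiniteTraceOn Set.univ σ) : Monotone σ := by
  intro x y hxy
  obtain ⟨z, hz⟩ := CStarAlgebra.nonneg_iff_eq_star_mul_self.1 (sub_nonneg.2 hxy)
  rw [← add_sub_cancel x y, hz, hσ.map_add trivial trivial]
  exact le_add_of_nonneg_right (hσ.map_star_mul_self_nonneg trivial)

theorem re_map_sqrt_mul_mul_sqrt_le (hσ : IsFiniteTraceOn Set.univ σ) {x u : A} (hx : 0 ≤ x)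
    (hu : u ≤ 1) : (σ (CFC.sqrt x * u * CFC.sqrt x)).re ≤ (σ x).re := by
  have hle : CFC.sqrt x * u * CFC.sqrt x ≤ x := by
    simpa [CFC.sqrt_mul_sqrt_self x hx] using
      (CFC.sqrt_nonneg x).isSelfAdjoint.conjugate_le_conjugate hu
  exact (Complex.le_def.1 (hσ.monotone hle)).1

end Univ

section Ideal

variable {I : Ideal A} {φ : A → ℂ}

theorem tendsto_of_mem_ideal (hφ : IsFiniteTraceOn (I : Set A) φ) {u : ℕ → A} {x : A}
    (hu : ∀ n, u n ∈ I) (hx : x ∈ I) (hlim : Tendsto u atTop (𝓝 x)) :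
    Tendsto (fun n => φ (u n)) atTop (𝓝 (φ x)) :=
  (hφ.continuousOn (S := I.restrictScalars ℂ) x hx).tendsto.comp
    (tendsto_nhdsWithin_iff.2 ⟨hlim, .of_forall hu⟩)

variable [PartialOrder A] [StarOrderedRing A]

theorem tendsto_map_conjugate (hφ : IsFiniteTraceOn (I : Set A) φ) {c : A} (hc : c ∈ I)
    {e : ℕ → A} (he : ∀ n, e n ∈ I) (he0 : ∀ n, 0 ≤ e n) (he1 : ∀ n, e n ≤ 1)
    (hlim : Tendsto (fun n => c * e n) atTop (𝓝 c)) :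
    Tendsto (fun n => φ (e n * c * e n)) atTop (𝓝 (φ c)) := by
  have hbdd : IsBoundedUnder (· ≤ ·) atTop (fun n => ‖e n‖) := isBoundedUnder_of
    ⟨1, fun n => (CStarAlgebra.norm_le_one_iff_of_nonneg (e n) (he0 n)).2 (he1 n)⟩
  have hdiff : Tendsto (fun n => c * e n - c) atTop (𝓝 0) := tendsto_sub_nhds_zero_iff.2 hlim
  have hlim' : Tendsto (fun n => c * e n * e n) atTop (𝓝 c) := by
    simpa [sub_mul] using (hdiff.zero_mul_isBoundedUnder_le hbdd).add hlim
  have hcomm (n : ℕ) : φ (e n * c * e n) = φ (c * e n * e n) := by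
    rw [mul_assoc, hφ.map_mul_comm (he n) (I.mul_mem_left c (he n))]
  simp only [hcomm]
  exact hφ.tendsto_of_mem_ideal (fun n => I.mul_mem_left _ (he n)) hc hlim'

theorem nonneg_add_map_of_conjugate_le (hφ : IsFiniteTraceOn (I : Set A) φ) {a x c : A}
    (hc : c ∈ I) (hxc : star a * a = x + c) {t : ℂ}
    (hle : ∀ e ∈ I, 0 ≤ e → e ≤ 1 → φ (e * x * e) ≤ t) : 0 ≤ t + φ c := by
  obtain ⟨e, he, he0, he1, hlim⟩ := exists_seq_tendsto_mul_of_mem hc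
  refine ge_of_tendsto' ((hφ.tendsto_map_conjugate hc he he0 he1 hlim).const_add t) fun n => ?_
  have hexp : star (a * e n) * (a * e n) = e n * x * e n + e n * c * e n := by
    rw [star_mul, (he0 n).isSelfAdjoint.star_eq, mul_assoc, ← mul_assoc (star a), hxc,
      ← mul_assoc, mul_add, add_mul]
  calc 0 ≤ φ (star (a * e n) * (a * e n)) :=
        hφ.map_star_mul_self_nonneg (I.mul_mem_left a (he n))
    _ = φ (e n * x * e n) + φ (e n * c * e n) := by
        rw [hexp, hφ.map_add (I.mul_mem_left _ (he n)) (I.mul_mem_left _ (he n))]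
    _ ≤ t + φ (e n * c * e n) := by gcongr; exact hle _ (he n) (he0 n) (he1 n)

variable [I.IsTwoSided]

theorem map_mul_comm_of_mem_ideal (hφ : IsFiniteTraceOn (I : Set A) φ) (a : A) {i : A}
    (hi : i ∈ I) : φ (a * i) = φ (i * a) := by
  obtain ⟨e, he, -, -, hlim⟩ := exists_seq_tendsto_mul_of_mem hi
  have hie (n : ℕ) : i * e n ∈ I := I.mul_mem_left i (he n)
  have hcomm (n : ℕ) : φ (a * (i * e n)) = φ (i * e n * a) :=
    calc φ (a * (i * e n)) = φ (e n * (a * i)) := by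
          rw [← mul_assoc, hφ.map_mul_comm (I.mul_mem_left a hi) (he n)]
      _ = φ (i * e n * a) := by
          rw [← mul_assoc, hφ.map_mul_comm (I.mul_mem_right a (he n)) hi, mul_assoc]
  refine tendsto_nhds_unique (hφ.tendsto_of_mem_ideal (fun n => I.mul_mem_left a (hie n))
    (I.mul_mem_left a hi) (hlim.const_mul a)) ?_
  simp only [hcomm]
  exact hφ.tendsto_of_mem_ideal (fun n => I.mul_mem_right a (hie n)) (I.mul_mem_right a hi)
    (hlim.mul_const a)

theorem map_sqrt_mul_mul_self_mul_sqrt (hφ : IsFiniteTraceOn (I : Set A) φ) {x e : A}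
    (hx : 0 ≤ x) (he : e ∈ I) :
    φ (CFC.sqrt x * (e * e) * CFC.sqrt x) = φ (e * x * e) :=
  calc φ (CFC.sqrt x * (e * e) * CFC.sqrt x)
      = φ (CFC.sqrt x * (CFC.sqrt x * (e * e))) :=
        (hφ.map_mul_comm_of_mem_ideal _ (I.mul_mem_left _ (I.mul_mem_left e he))).symm
    _ = φ (x * e * e) := by rw [← mul_assoc, CFC.sqrt_mul_sqrt_self x hx, mul_assoc]
    _ = φ (e * x * e) := by rw [hφ.map_mul_comm (I.mul_mem_left x he) he, mul_assoc]

theorem map_conjugate_le (hφ : IsFiniteTraceOn (I : Set A) φ) {S : Set A} {τ : A → ℂ}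
    (hτ : IsFiniteTraceOn S τ) {b : A} (hb : b ∈ S)
    (hle : ∀ u ∈ I, 0 ≤ u → u ≤ 1 →
      (φ (CFC.sqrt (star b * b) * u * CFC.sqrt (star b * b))).re ≤ (τ (star b * b)).re)
    {e : A} (he : e ∈ I) (he0 : 0 ≤ e) (he1 : e ≤ 1) :
    φ (e * (star b * b) * e) ≤ τ (star b * b) := by
  have hstar : star (b * e) * (b * e) = e * (star b * b) * e := by
    simp only [star_mul, he0.isSelfAdjoint.star_eq, mul_assoc]
  have hφpos := hφ.map_star_mul_self_nonneg (I.mul_mem_left b he)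
  rw [hstar] at hφpos
  have hre := hle (e * e) (I.mul_mem_left e he) he0.isSelfAdjoint.mul_self_nonneg
    (by simpa [sq] using CStarAlgebra.pow_antitone he0 he1 (Nat.zero_le 2))
  rw [hφ.map_sqrt_mul_mul_self_mul_sqrt (star_mul_self_nonneg b) he] at hre
  exact Complex.le_def.2 ⟨hre, (Complex.nonneg_iff.1 hφpos).2.symm.trans
    (Complex.nonneg_iff.1 (hτ.map_star_mul_self_nonneg hb)).2⟩

end Ideal

end IsFiniteTraceOn

section Extension

open scoped ComplexOrder

variable {A : Type*} [CStarAlgebra A] {B : NonUnitalStarSubalgebra ℂ A} {I : Ideal A}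
  {τ φ : A → ℂ}

theorem exists_linearMap_extending_traces (hBI : ∀ x : A, ∃ b ∈ B, ∃ i ∈ I, x = b + i)
    (hτ : IsFiniteTraceOn (B : Set A) τ) (hφ : IsFiniteTraceOn (I : Set A) φ)
    (hagree : ∀ x ∈ B, x ∈ I → φ x = τ x) :
    ∃ σ : A →ₗ[ℂ] ℂ, (∀ x ∈ B, σ x = τ x) ∧ ∀ x ∈ I, σ x = φ x := by
  have hcodisj : Codisjoint B.toSubmodule (I.restrictScalars ℂ) :=
    Submodule.codisjoint_iff_exists_add_eq.2 fun x =>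
      let ⟨b, hb, i, hi, hx⟩ := hBI x
      ⟨b, i, hb, hi, hx.symm⟩
  obtain ⟨σ, hσB, hσI⟩ := exists_linearMap_extending_of_codisjoint hcodisj
    (IsFiniteTraceOn.toLinearMap (S := B.toSubmodule) hτ)
    (IsFiniteTraceOn.toLinearMap (S := I.restrictScalars ℂ) hφ)
    (fun ⟨x, hx⟩ ⟨y, hy⟩ hxy => by obtain rfl : x = y := hxy; exact (hagree x hx hy).symm)
  exact ⟨σ, fun x hx => hσB ⟨x, hx⟩, fun x hx => hσI ⟨x, hx⟩⟩

variable [PartialOrder A] [StarOrderedRing A] [I.IsTwoSided]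

theorem map_star_mul_self_nonneg_of_extends (hI : IsClosed (I : Set A))
    (hτ : IsFiniteTraceOn (B : Set A) τ) (hφ : IsFiniteTraceOn (I : Set A) φ)
    (hle : ∀ x ∈ B, 0 ≤ x → ∀ u ∈ I, 0 ≤ u → u ≤ 1 →
      (φ (CFC.sqrt x * u * CFC.sqrt x)).re ≤ (τ x).re)
    {σ : A →ₗ[ℂ] ℂ} (hσB : ∀ x ∈ B, σ x = τ x) (hσI : ∀ x ∈ I, σ x = φ x) {b i : A}
    (hb : b ∈ B) (hi : i ∈ I) : 0 ≤ σ (star (b + i) * (b + i)) := by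
  have hbb : star b * b ∈ B := mul_mem (star_mem hb) hb
  have hc : star b * i + star i * (b + i) ∈ I :=
    I.add_mem (I.mul_mem_left _ hi) (I.mul_mem_right _ (star_mem_of_isClosed hI hi))
  have hexp : star (b + i) * (b + i) = star b * b + (star b * i + star i * (b + i)) := by
    rw [star_add]
    noncomm_ring
  rw [hexp, map_add, hσB _ hbb, hσI _ hc]
  exact hφ.nonneg_add_map_of_conjugate_le hc hexp fun e he he0 he1 =>
    hφ.map_conjugate_le hτ hb (hle _ hbb (star_mul_self_nonneg b)) he he0 he1

theorem trace_extension_general (hI : IsClosed (I : Set A))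
    (hBI : ∀ x : A, ∃ b ∈ B, ∃ i ∈ I, x = b + i)
    (hτ : IsFiniteTraceOn (B : Set A) τ) (hφ : IsFiniteTraceOn (I : Set A) φ)
    (hagree : ∀ x ∈ B, x ∈ I → φ x = τ x)
    (hle : ∀ x ∈ B, 0 ≤ x → ∀ u ∈ I, 0 ≤ u → u ≤ 1 →
      (φ (CFC.sqrt x * u * CFC.sqrt x)).re ≤ (τ x).re) :
    ∃! σ : A → ℂ, IsFiniteTraceOn Set.univ σ ∧ (∀ x ∈ B, σ x = τ x) ∧ ∀ x ∈ I, σ x = φ x := by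
  obtain ⟨σ, hσB, hσI⟩ := exists_linearMap_extending_traces hBI hτ hφ hagree
  have hpos (x : A) : 0 ≤ σ (star x * x) := by
    obtain ⟨b, hb, i, hi, rfl⟩ := hBI x
    exact map_star_mul_self_nonneg_of_extends hI hτ hφ hle hσB hσI hb hi
  have hcommB : ∀ x ∈ B, ∀ y ∈ B, σ (x * y) = σ (y * x) := fun x hx y hy => by
    rw [hσB _ (mul_mem hx hy), hσB _ (mul_mem hy hx), hτ.map_mul_comm hx hy]
  have hcommI : ∀ a, ∀ i ∈ I, σ (a * i) = σ (i * a) := fun a i hi => by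
    rw [hσI _ (I.mul_mem_left a hi), hσI _ (I.mul_mem_right a hi),
      hφ.map_mul_comm_of_mem_ideal a hi]
  have hcomm := map_mul_comm_of_forall_exists_add σ.toAddMonoidHom hBI hcommB hcommI
  refine ⟨σ, ⟨.univ_of_nonneg σ hpos hcomm, hσB, hσI⟩, fun σ' ⟨hσ', hσ'B, hσ'I⟩ => ?_⟩
  funext x
  obtain ⟨b, hb, i, hi, rfl⟩ := hBI x
  rw [hσ'.map_add trivial trivial, hσ'B b hb, hσ'I i hi, map_add, hσB b hb, hσI i hi]

end Extension

/-- Exel–Laca type trace extension. Let `A` be a unital C*-algebra, `B` a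
closed *-subalgebra containing the unit, and `I` a closed two-sided ideal with `A = B + I`.
Let `τ` be a finite trace on `B` and `φ` a finite trace on `I`.  If (1) `φ = τ` on `B ∩ I` and
(2) `φ(x^{1/2}·u·x^{1/2}) ≤ τ(x)` for every positive `x ∈ B` and every `u ∈ I` with
`0 ≤ u ≤ 1`, then there is a unique finite trace on `A` extending `τ` and `φ`.  Conversely,
the restrictions of any finite trace on `A` to `B` and `I` satisfy (1) and (2). -/
theorem trace_extension
    {A : Type*} [CStarAlgebra A] [PartialOrder A] [StarOrderedRing A]
    (B : Set A) (hB1 : (1 : A) ∈ B) (hBclosed : IsClosed B)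
    (hBadd : ∀ x ∈ B, ∀ y ∈ B, x + y ∈ B)
    (hBmul : ∀ x ∈ B, ∀ y ∈ B, x * y ∈ B)
    (hBstar : ∀ x ∈ B, star x ∈ B)
    (hBsmul : ∀ z : ℂ, ∀ x ∈ B, z • x ∈ B)
    (I : Set A) (hIclosed : IsClosed I) (hI0 : (0 : A) ∈ I)
    (hIadd : ∀ x ∈ I, ∀ y ∈ I, x + y ∈ I)
    (hIsmul : ∀ z : ℂ, ∀ x ∈ I, z • x ∈ I)
    (hIabs : ∀ a ∈ I, ∀ x : A, x * a ∈ I ∧ a * x ∈ I)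
    (hsum : ∀ x : A, ∃ b ∈ B, ∃ i ∈ I, x = b + i)
    (τ φ : A → ℂ)
    (hτ : IsFiniteTraceOn B τ) (hφ : IsFiniteTraceOn I φ) :
    (((∀ x ∈ B ∩ I, φ x = τ x) ∧
        (∀ x ∈ B, 0 ≤ x → ∀ u ∈ I, 0 ≤ u → u ≤ 1 →
          (φ (CFC.sqrt x * u * CFC.sqrt x)).re ≤ (τ x).re)) →
      ∃! σ : A → ℂ, IsFiniteTraceOn Set.univ σ ∧
        (∀ x ∈ B, σ x = τ x) ∧ (∀ x ∈ I, σ x = φ x)) ∧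
    (∀ σ : A → ℂ, IsFiniteTraceOn Set.univ σ →
      (∀ x ∈ B ∩ I, σ x = σ x) ∧
      (∀ x ∈ B, 0 ≤ x → ∀ u ∈ I, 0 ≤ u → u ≤ 1 →
        (σ (CFC.sqrt x * u * CFC.sqrt x)).re ≤ (σ x).re)) := by
  let B' : NonUnitalStarSubalgebra ℂ A :=
    { carrier := B, add_mem' := fun hx hy => hBadd _ hx _ hy,
      zero_mem' := by simpa using hBsmul 0 1 hB1, mul_mem' := fun hx hy => hBmul _ hx _ hy,
      smul_mem' := fun z x hx => hBsmul z x hx, star_mem' := fun hx => hBstar _ hx }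
  let I' : Ideal A :=
    { carrier := I, add_mem' := fun hx hy => hIadd _ hx _ hy, zero_mem' := hI0,
      smul_mem' := fun a x hx => (hIabs x hx a).1 }
  have : I'.IsTwoSided := ⟨fun a hx => (hIabs _ hx a).2⟩
  exact ⟨fun ⟨hagree, hle⟩ => trace_extension_general (B := B') (I := I') hIclosed hsum hτ hφ
      (fun x hxB hxI => hagree x ⟨hxB, hxI⟩) hle,
    fun σ hσ => ⟨fun _ _ => rfl, fun x _ hx u _ _ hu => hσ.re_map_sqrt_mul_mul_sqrt_le hx hu⟩⟩
end
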